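/- arXiv:1410.4128 — 5 statements merged into one kernel-verified Lean document; each statement's English description precedes it below -/
import Mathlib

section
/- Let f ∈ GR_D(Q0,ε) for some ε ∈ (0, 1/2^{n−1}), and let p > 1 be the unique real number with p^p/(p−1)^{p−1} = 1/(2^{n−1}ε). Then for every t ∈ (0,1], f^{**}(t) ≤ (p/(p−1)) · f_{Q0} · t^{−1/p}. -/
open MeasureTheory Set Real

noncomputable section

/-- The unit cube `Q₀ = [0,1]ⁿ` in `ℝⁿ`. -/
def Q0 (n : ℕ) : Set (Fin n → ℝ) := Set.Icc 0 1

/-- The integral average `f_Q = (1/|Q|) ∫_Q f` of `f` over `Q`. -/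
def avgOn {n : ℕ} (f : (Fin n → ℝ) → ℝ) (Q : Set (Fin n → ℝ)) : ℝ :=
  (volume Q).toReal⁻¹ * ∫ x in Q, f x

/-- The mean oscillation `Ω(f,Q) = (1/|Q|) ∫_Q |f - f_Q|` of `f` over `Q`. -/
def oscOn {n : ℕ} (f : (Fin n → ℝ) → ℝ) (Q : Set (Fin n → ℝ)) : ℝ :=
  (volume Q).toReal⁻¹ * ∫ x in Q, |f x - avgOn f Q|

/-- `Q` is a dyadic subcube of `[0,1]ⁿ` of side length `2⁻ᵏ`,
i.e. `Q = ∏ᵢ [mᵢ 2⁻ᵏ, (mᵢ+1) 2⁻ᵏ]` with `0 ≤ mᵢ < 2ᵏ`. -/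
def IsDyadicSide (n k : ℕ) (Q : Set (Fin n → ℝ)) : Prop :=
  ∃ m : Fin n → ℕ, (∀ i, m i < 2 ^ k) ∧
    Q = Set.Icc (fun i => (m i : ℝ) / 2 ^ k) (fun i => ((m i : ℝ) + 1) / 2 ^ k)

/-- `Q` belongs to the family `𝒟` of dyadic subcubes of `[0,1]ⁿ`. -/
def IsDyadic (n : ℕ) (Q : Set (Fin n → ℝ)) : Prop := ∃ k, IsDyadicSide n k Q

/-- One-dimensional integral average `g_J` over a set `J ⊆ ℝ`. -/
def avgI (g : ℝ → ℝ) (J : Set ℝ) : ℝ := (volume J).toReal⁻¹ * ∫ u in J, g u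

/-- One-dimensional mean oscillation `Ω(g,J)` over a set `J ⊆ ℝ`. -/
def oscI (g : ℝ → ℝ) (J : Set ℝ) : ℝ :=
  (volume J).toReal⁻¹ * ∫ u in J, |g u - avgI g J|

/-- `g : (0,1] → ℝ` is the nonincreasing, left-continuous rearrangement of
`f : [0,1]ⁿ → ℝ`, i.e. it is nonincreasing, left continuous and equimeasurable with `f`. -/
def IsRearrangement {n : ℕ} (f : (Fin n → ℝ) → ℝ) (g : ℝ → ℝ) : Prop :=
  AntitoneOn g (Set.Ioc 0 1) ∧
  (∀ t ∈ Set.Ioc (0:ℝ) 1, ContinuousWithinAt g (Set.Iio t) t) ∧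
  ∀ lam : ℝ, volume {t ∈ Set.Ioc (0:ℝ) 1 | lam < g t} = volume {x ∈ Q0 n | lam < f x}

/-- The Hardy average `F(t) = (1/t) ∫_0^t g(u) du`. -/
def hardyAvg (g : ℝ → ℝ) (t : ℝ) : ℝ := t⁻¹ * ∫ u in Set.Ioc (0:ℝ) t, g u

/-- The Gurov–Reshetnyak modulus
`v(f;σ) = sup { Ω(f,Q)/f_Q : Q ∈ 𝒟, ℓ(Q) ≤ σ, f_Q > 0 }` (equal to `0` if no such `Q` exists,
by the convention `sSup ∅ = 0` in `ℝ`). -/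
def vGR {n : ℕ} (f : (Fin n → ℝ) → ℝ) (σ : ℝ) : ℝ :=
  sSup {r : ℝ | ∃ k Q, IsDyadicSide n k Q ∧ ((2:ℝ) ^ k)⁻¹ ≤ σ ∧
    0 < avgOn f Q ∧ r = oscOn f Q / avgOn f Q}

/-- `f` satisfies the dyadic Gurov–Reshetnyak condition `f ∈ GR_𝒟(Q₀,ε)`:
`f : Q₀ → [0,∞)` is integrable and `Ω(f,Q) ≤ ε f_Q` for every dyadic cube `Q`. -/
def GRcond {n : ℕ} (f : (Fin n → ℝ) → ℝ) (ε : ℝ) : Prop :=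
  IntegrableOn f (Q0 n) ∧ (∀ x ∈ Q0 n, 0 ≤ f x) ∧
    ∀ Q, IsDyadic n Q → oscOn f Q ≤ ε * avgOn f Q


def hcube (n k : ℕ) (m : Fin n → ℕ) : Set (Fin n → ℝ) :=
  Set.pi univ fun i => Ico ((m i : ℝ) / 2 ^ k) (((m i : ℝ) + 1) / 2 ^ k)

lemma mem_hcube {n k : ℕ} {m : Fin n → ℕ} {x : Fin n → ℝ} :
    x ∈ hcube n k m ↔ ∀ i, ⌊x i * 2 ^ k⌋ = (m i : ℤ) := by
  simp only [hcube, Set.mem_pi, mem_univ, true_imp_iff, mem_Ico]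
  refine forall_congr' fun i => ?_
  rw [Int.floor_eq_iff, div_le_iff₀ (by positivity), lt_div_iff₀ (by positivity)]
  norm_cast

lemma hcube_meas (n k : ℕ) (m : Fin n → ℕ) : MeasurableSet (hcube n k m) :=
  MeasurableSet.univ_pi fun _ => measurableSet_Ico

lemma hcube_ae (n k : ℕ) (m : Fin n → ℕ) :
    hcube n k m =ᵐ[volume]
      Set.Icc (fun i => (m i : ℝ) / 2 ^ k) (fun i => ((m i : ℝ) + 1) / 2 ^ k) :=
  Measure.univ_pi_Ico_ae_eq_Icc

lemma hcube_vol (n k : ℕ) (m : Fin n → ℕ) :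
    volume (hcube n k m) = ENNReal.ofReal (((2:ℝ) ^ k)⁻¹ ^ n) := by
  rw [measure_congr (hcube_ae n k m), Real.volume_Icc_pi]
  have : ∀ i, ((m i : ℝ) + 1) / 2 ^ k - (m i : ℝ) / 2 ^ k = (2 ^ k)⁻¹ := by
    intro i; field_simp; ring
  simp only [this]
  rw [Finset.prod_const, ENNReal.ofReal_pow (by positivity)]
  simp

lemma hcube_real (n k : ℕ) (m : Fin n → ℕ) :
    volume.real (hcube n k m) = ((2:ℝ) ^ k)⁻¹ ^ n := by
  rw [Measure.real, hcube_vol, ENNReal.toReal_ofReal (by positivity)]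

lemma hcube_union (n k : ℕ) (m : Fin n → ℕ) :
    hcube n k m = ⋃ b : Fin n → Fin 2, hcube n (k+1) (fun i => 2 * m i + (b i : ℕ)) := by
  ext x
  simp only [mem_iUnion, mem_hcube]
  have key : ∀ i, ⌊x i * 2 ^ k⌋ = ⌊x i * 2 ^ (k+1)⌋ / 2 := by
    intro i
    have := Int.floor_div_natCast (x i * 2 ^ (k+1)) 2
    push_cast at this
    rw [← this]
    congr 1
    rw [pow_succ]; ring
  constructor
  · intro h
    refine ⟨fun i => ⟨(⌊x i * 2 ^ (k+1)⌋ % 2).toNat, by omega⟩, fun i => ?_⟩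
    have h1 := h i
    rw [key] at h1
    push_cast
    omega
  · rintro ⟨b, hb⟩ i
    have h1 := hb i
    have h2 := (b i).2
    rw [key]
    push_cast at h1
    omega

lemma hcube_disj (n k : ℕ) (m : Fin n → ℕ) :
    Pairwise (Function.onFun Disjoint
      fun b : Fin n → Fin 2 => hcube n (k+1) (fun i => 2 * m i + (b i : ℕ))) := by
  intro b b' hbb
  rw [Function.onFun, Set.disjoint_left]
  intro x h h'
  rw [mem_hcube] at h h'
  apply hbb
  funext i
  have h1 := h i
  have h2 := h' i
  apply Fin.ext
  push_cast at h1 h2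
  omega

lemma hcube_sub {n k : ℕ} {m : Fin n → ℕ} (hm : ∀ i, m i < 2 ^ k) : hcube n k m ⊆ Q0 n := by
  intro x hx
  simp only [hcube, Set.mem_pi, mem_univ, true_imp_iff, mem_Ico] at hx
  refine ⟨fun i => ?_, fun i => ?_⟩
  · exact le_trans (by positivity) (hx i).1
  · refine (hx i).2.le.trans ?_
    rw [Pi.one_apply, div_le_one (by positivity)]
    exact_mod_cast hm i

lemma Q0_eq (n : ℕ) :
    Q0 n = Set.Icc (fun i => (((0 : Fin n → ℕ) i : ℕ) : ℝ) / 2 ^ 0)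
      (fun i => ((((0 : Fin n → ℕ) i : ℕ) : ℝ) + 1) / 2 ^ 0) := by
  simp [Q0]; rfl

lemma hcube_zero (n : ℕ) : hcube n 0 0 =ᵐ[volume] Q0 n := by
  rw [Q0_eq]; exact hcube_ae n 0 0

lemma Q0_real (n : ℕ) : (volume (Q0 n)).toReal = 1 := by
  rw [← measure_congr (hcube_zero n)]
  have := hcube_real n 0 0
  simpa [Measure.real] using this

lemma GR_hcube {n : ℕ} {f : (Fin n → ℝ) → ℝ} {ε : ℝ} (hf : GRcond f ε) {k : ℕ} {m : Fin n → ℕ}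
    (hm : ∀ i, m i < 2 ^ k) :
    ∫ x in hcube n k m, |f x - (volume.real (hcube n k m))⁻¹ * ∫ y in hcube n k m, f y|
      ≤ ε * ∫ y in hcube n k m, f y := by
  have h := hf.2.2 _ ⟨k, m, hm, rfl⟩
  rw [oscOn, avgOn, ← measure_congr (hcube_ae n k m), ← setIntegral_congr_set (hcube_ae n k m),
    ← setIntegral_congr_set (hcube_ae n k m)] at h
  have hv : 0 < volume.real (hcube n k m) := by rw [hcube_real]; positivity
  change (volume.real (hcube n k m))⁻¹ * _ ≤ ε * ((volume.real (hcube n k m))⁻¹ * _) at h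
  rw [mul_left_comm] at h
  exact le_of_mul_le_mul_left h (inv_pos.2 hv)

/-- Half of the oscillation. -/
lemma half_osc {n : ℕ} {f : (Fin n → ℝ) → ℝ} {ε lam : ℝ} (hf : GRcond f ε) {k : ℕ}
    {m : Fin n → ℕ} (hm : ∀ i, m i < 2 ^ k)
    (hl : ∫ y in hcube n k m, f y ≤ lam * volume.real (hcube n k m)) :
    2 * ∫ x in hcube n k m, max (f x - lam) 0 ≤ 
     ∫ x in hcube n k m, |f x - (volume.real (hcube n k m))⁻¹ * ∫ y in hcube n k m, f y| := by
  have hv : 0 < volume.real (hcube n k m) := by rw [hcube_real]; positivity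
  have hfin : volume (hcube n k m) ≠ ⊤ := by rw [hcube_vol]; exact ENNReal.ofReal_ne_top
  have hfi : IntegrableOn f (hcube n k m) := hf.1.mono_set (hcube_sub hm)
  set A := ∫ y in hcube n k m, f y
  set V := volume.real (hcube n k m)
  have hc : ∀ c : ℝ, IntegrableOn (fun _ : Fin n → ℝ => c) (hcube n k m) := fun c =>
    integrableOn_const hfin
  have i1 : IntegrableOn (fun x => f x - V⁻¹ * A) (hcube n k m) := hfi.sub (hc _)
  have i2 : IntegrableOn (fun x => |f x - V⁻¹ * A|) (hcube n k m) := i1.abs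
  have i3 : IntegrableOn (fun x => max (f x - lam) 0) (hcube n k m) :=
    Integrable.pos_part (hfi.sub (hc _))
  have h0 : ∫ x in hcube n k m, (f x - V⁻¹ * A) = 0 := by
    rw [integral_sub hfi (hc _), setIntegral_const]
    change A - V • (V⁻¹ * A) = 0
    rw [smul_eq_mul]; field_simp; ring
  have hle : V⁻¹ * A ≤ lam := by
    rw [inv_mul_le_iff₀ hv, mul_comm]; exact hl
  calc 2 * ∫ x in hcube n k m, max (f x - lam) 0
      = ∫ x in hcube n k m, 2 * max (f x - lam) 0 := (integral_const_mul _ _).symm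
    _ ≤ ∫ x in hcube n k m, (|f x - V⁻¹ * A| + (f x - V⁻¹ * A)) := by
        apply integral_mono (i3.const_mul 2) (i2.add i1)
        intro x
        simp only [Pi.add_apply]
        rcases max_cases (f x - lam) 0 with h | h <;>
          rcases abs_cases (f x - V⁻¹ * A) with h' | h' <;> linarith
    _ = _ := by rw [integral_add i2 i1, h0, add_zero]

lemma core_ind {n : ℕ} (hn : 1 ≤ n) {f g : (Fin n → ℝ) → ℝ} {ε lam mu δ : ℝ} (hε : 0 < ε)
    (hf : GRcond f ε) (hlam : 0 ≤ lam) (hmu : mu < lam) (hδ : 0 < δ)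
    (hg : Integrable g (volume.restrict (Q0 n))) (N : ℕ)
    (hN : ∀ m : Fin n → ℕ, ∀ x ∈ hcube n N m, ∀ y ∈ hcube n N m, |g x - g y| ≤ δ) :
    ∀ j ≤ N, ∀ m : Fin n → ℕ, (∀ i, m i < 2 ^ (N - j)) →
      ∫ y in hcube n (N - j) m, f y ≤ lam * volume.real (hcube n (N - j) m) →
      0 ≤ ∫ x in hcube n (N - j) m, (2 ^ (n-1) * ε * lam / (lam - mu) * max (f x - mu) 0
        + (2 * |f x - g x| + 2 * δ) - max (f x - lam) 0) := by
  have hfin : ∀ k m, volume (hcube n k m) ≠ ⊤ := fun k m => by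
    rw [hcube_vol]; exact ENNReal.ofReal_ne_top
  have hc : ∀ k m, ∀ c : ℝ, IntegrableOn (fun _ : Fin n → ℝ => c) (hcube n k m) := fun k m c =>
    integrableOn_const (hfin k m)
  have hvp : ∀ k m, 0 < volume.real (hcube n k m) := fun k m => by rw [hcube_real]; positivity
  set K := 2 ^ (n-1) * ε * lam / (lam - mu) with hK
  have hlm : 0 < lam - mu := by linarith
  have hK0 : 0 ≤ K := by positivity
  have ip : ∀ k m, (∀ i, m i < 2 ^ k) → ∀ c, 
      IntegrableOn (fun x => max (f x - c) 0) (hcube n k m) := fun k m hm c =>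
    Integrable.pos_part ((hf.1.mono_set (hcube_sub hm)).sub (hc k m _))
  have id : ∀ k m, (∀ i, m i < 2 ^ k) → 
      IntegrableOn (fun x => |f x - g x|) (hcube n k m) := fun k m hm =>
    ((hf.1.sub hg).mono_set (hcube_sub hm)).abs
  have ie : ∀ k m, (∀ i, m i < 2 ^ k) → 
      IntegrableOn (fun x => 2 * |f x - g x| + 2 * δ) (hcube n k m) := fun k m hm =>
    ((id k m hm).const_mul 2).add (hc k m _)
  have iH : ∀ k m, (∀ i, m i < 2 ^ k) → IntegrableOn (fun x => K * max (f x - mu) 0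
        + (2 * |f x - g x| + 2 * δ) - max (f x - lam) 0) (hcube n k m) := fun k m hm =>
    (((ip k m hm mu).const_mul K).add (ie k m hm)).sub (ip k m hm lam)
  have eH : ∀ k m, (∀ i, m i < 2 ^ k) → ∫ x in hcube n k m, (K * max (f x - mu) 0
        + (2 * |f x - g x| + 2 * δ) - max (f x - lam) 0) = 
        K * (∫ x in hcube n k m, max (f x - mu) 0) + (∫ x in hcube n k m, (2 * |f x - g x| + 2 * δ))
        - ∫ x in hcube n k m, max (f x - lam) 0 := fun k m hm => by
    have i0 : IntegrableOn (fun x => K * max (f x - mu) 0 + (2 * |f x - g x| + 2 * δ))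
        (hcube n k m) := ((ip k m hm mu).const_mul K).add (ie k m hm)
    rw [integral_sub i0 (ip k m hm lam),
      integral_add ((ip k m hm mu).const_mul K) (ie k m hm), integral_const_mul]
  have npos : ∀ k m c, 0 ≤ ∫ x in hcube n k m, max (f x - c) 0 := fun k m c =>
    integral_nonneg fun x => le_max_right _ _
  have nerr : ∀ k m, 0 ≤ ∫ x in hcube n k m, (2 * |f x - g x| + 2 * δ) := fun k m =>
    integral_nonneg fun x => by positivity
  intro j
  induction j with
  | zero =>
    intro _ m hm hl
    simp only [Nat.sub_zero] at *
    rw [eH _ _ hm]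
    have h1 := half_osc hf hm hl
    obtain ⟨z, hz⟩ : (hcube n N m).Nonempty := by
      apply nonempty_of_measureReal_ne_zero (μ := volume) (hvp N m).ne'
    have hfi : IntegrableOn f (hcube n N m) := hf.1.mono_set (hcube_sub hm)
    set A := ∫ y in hcube n N m, f y with hA
    set V := volume.real (hcube n N m) with hV
    have hVp : 0 < V := hvp N m
    have b1 : ∫ x in hcube n N m, |f x - g z| ≤ (∫ x in hcube n N m, |f x - g x|) + δ * V := by
      have : δ * V = ∫ x in hcube n N m, δ := by
        rw [setIntegral_const, smul_eq_mul, mul_comm]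
      rw [this, ← integral_add (id _ _ hm) (hc _ _ _)]
      apply setIntegral_mono_on (hfi.sub (hc _ _ _)).abs ((id _ _ hm).add (hc _ _ _))
        (hcube_meas n N m)
      intro x hx
      have := hN m x hx z hz
      have h3 := abs_add_le (f x - g x) (g x - g z)
      rw [sub_add_sub_cancel] at h3
      simp only [Pi.add_apply, Pi.sub_apply]
      linarith
    have b2 : V * |g z - V⁻¹ * A| ≤ ∫ x in hcube n N m, |f x - g z| := by
      have e : ∫ x in hcube n N m, (f x - g z) = A - V * g z := by
        rw [integral_sub hfi (hc _ _ _), setIntegral_const]; rfl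
      have := abs_integral_le_integral_abs (μ := volume.restrict (hcube n N m)) (f := fun x => f x - g z)
      rw [e] at this
      refine le_trans (le_of_eq ?_) this
      rw [abs_sub_comm, show A - V * g z = V * (V⁻¹ * A - g z) by field_simp, abs_mul, abs_of_pos hVp]
    have b3 : ∫ x in hcube n N m, |f x - V⁻¹ * A| ≤
        (∫ x in hcube n N m, |f x - g z|) + V * |g z - V⁻¹ * A| := by
      have : V * |g z - V⁻¹ * A| = ∫ x in hcube n N m, |g z - V⁻¹ * A| := by
        rw [setIntegral_const, smul_eq_mul]
      have i0 : ∀ c, IntegrableOn (fun x => |f x - c|) (hcube n N m) := fun c =>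
        (hfi.sub (hc _ _ _)).abs
      rw [this, ← integral_add (i0 _) (hc _ _ _)]
      apply integral_mono (i0 _) ((i0 _).add (hc _ _ _))
      intro x
      have h3 := abs_add_le (f x - g z) (g z - V⁻¹ * A)
      rw [sub_add_sub_cancel] at h3
      exact h3
    have b4 : ∫ x in hcube n N m, (2 * |f x - g x| + 2 * δ) =
        2 * (∫ x in hcube n N m, |f x - g x|) + 2 * δ * V := by
      rw [integral_add ((id _ _ hm).const_mul 2) (hc _ _ _), integral_const_mul, setIntegral_const,
        smul_eq_mul, mul_comm V]
    have := mul_nonneg hK0 (npos N m mu)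
    have := npos N m lam
    linarith
  | succ j ih =>
    intro hj m hm hl
    have ih := ih (by omega)
    obtain ⟨k, hk⟩ : ∃ k, k = N - (j+1) := ⟨_, rfl⟩
    have hk' : N - j = k + 1 := by omega
    rw [hk'] at ih
    rw [← hk] at hm hl ⊢
    have hmb : ∀ b : Fin n → Fin 2, ∀ i, 2 * m i + (b i : ℕ) < 2 ^ (k+1) := by
      intro b i
      have := hm i
      have := (b i).2
      rw [pow_succ]; omega
    by_cases hall : ∀ b : Fin n → Fin 2,
        ∫ y in hcube n (k+1) (fun i => 2 * m i + (b i : ℕ)), f y ≤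
          lam * volume.real (hcube n (k+1) (fun i => 2 * m i + (b i : ℕ)))
    · rw [hcube_union, integral_iUnion_fintype (fun b => hcube_meas _ _ _) (hcube_disj n k m)
        (fun b => iH _ _ (hmb b))]
      exact Finset.sum_nonneg fun b _ => ih _ (hmb b) (hall b)
    · push Not at hall
      obtain ⟨b, hb⟩ := hall
      have hsub : hcube n (k+1) (fun i => 2 * m i + (b i : ℕ)) ⊆ hcube n k m := by
        rw [hcube_union n k m]
        exact subset_iUnion (fun b : Fin n → Fin 2 => hcube n (k+1) (fun i => 2 * m i + (b i : ℕ))) b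
      have hmb' : ∀ i, (fun i => 2 * m i + (b i : ℕ)) i < 2 ^ (k+1) := hmb b
      generalize (fun i => 2 * m i + (b i : ℕ)) = m' at hb hsub hmb'
      have hvol : volume.real (hcube n k m) = 2 * 2 ^ (n-1) * volume.real (hcube n (k+1) m') := by
        rw [hcube_real, hcube_real]
        have : (2:ℝ) * 2 ^ (n-1) = 2 ^ n := by
          rw [← pow_succ']; congr 1; omega
        rw [this, ← mul_pow, pow_succ]
        congr 1
        field_simp
      have h1 := half_osc hf hm hl
      have h2 := GR_hcube hf hm
      have h3 : (lam - mu) * volume.real (hcube n (k+1) m') ≤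
          ∫ x in hcube n k m, max (f x - mu) 0 := by
        have hfi' : IntegrableOn f (hcube n (k+1) m') := hf.1.mono_set (hcube_sub hmb')
        calc _ ≤ ∫ x in hcube n (k+1) m', (f x - mu) := by
              rw [integral_sub hfi' (hc _ _ _), setIntegral_const, smul_eq_mul]
              linarith
          _ ≤ ∫ x in hcube n (k+1) m', max (f x - mu) 0 :=
              integral_mono (hfi'.sub (hc _ _ _)) (ip _ _ hmb' _) fun x => le_max_left _ _
          _ ≤ _ := setIntegral_mono_set (ip _ _ hm _)
              (Filter.Eventually.of_forall fun x => le_max_right _ _) hsub.eventuallyLE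
      rw [eH _ _ hm]
      have h4 := mul_le_mul_of_nonneg_left h3 hK0
      have h5 : K * ((lam - mu) * volume.real (hcube n (k+1) m')) =
          2 ^ (n-1) * ε * lam * volume.real (hcube n (k+1) m') := by
        rw [hK]; field_simp
      have h6 := mul_le_mul_of_nonneg_left hl hε.le
      rw [hvol] at h6
      have := nerr k m
      nlinarith

lemma core {n : ℕ} (hn : 1 ≤ n) {f : (Fin n → ℝ) → ℝ} {ε lam mu : ℝ} (hε : 0 < ε)
    (hf : GRcond f ε) (hlam : 0 ≤ lam) (hmu : mu < lam) (havg : ∫ x in Q0 n, f x ≤ lam) :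
    ∫ x in Q0 n, max (f x - lam) 0 ≤
      2 ^ (n-1) * ε * lam / (lam - mu) * ∫ x in Q0 n, max (f x - mu) 0 := by
  apply le_of_forall_pos_le_add
  intro η hη
  have hQm : MeasurableSet (Q0 n) := measurableSet_Icc
  have hQv := Q0_real n
  have hQfin : volume (Q0 n) ≠ ⊤ := by
    intro h; rw [h] at hQv; simp at hQv
  have : IsFiniteMeasure (volume.restrict (Q0 n)) := ⟨by simpa using lt_top_iff_ne_top.2 hQfin⟩
  obtain ⟨g, hgc, hfg, hgcont, hgi⟩ :=
    hf.1.exists_hasCompactSupport_integral_sub_le (ε := η / 4) (by positivity)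
  have huc := hgcont.uniformContinuous_of_tendsto_cocompact
    (hgc.is_zero_at_infty)
  obtain ⟨r, hr, hrg⟩ := Metric.uniformContinuous_iff.1 huc (η / 4) (by positivity)
  obtain ⟨N, hN⟩ := exists_pow_lt_of_lt_one hr (show (1/2:ℝ) < 1 by norm_num)
  have key := core_ind hn (g := g) (δ := η/4) hε hf hlam hmu (by positivity) hgi N (by
    intro m x hx y hy
    have : dist x y < r := by
      rw [dist_pi_lt_iff hr]
      intro i
      simp only [hcube, Set.mem_pi, mem_univ, true_imp_iff, mem_Ico] at hx hy
      have h1 := hx i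
      have h2 := hy i
      rw [add_div] at h1 h2
      have e : (1:ℝ) / 2 ^ N = (1/2)^N := by rw [div_pow, one_pow]
      rw [e] at h1 h2
      rw [Real.dist_eq, abs_lt]
      constructor <;> linarith
    have := hrg this
    rw [Real.dist_eq] at this
    exact this.le) N le_rfl 0 (by simp) (by
      rw [Nat.sub_self, hcube_real, setIntegral_congr_set (hcube_zero n)]; simpa using havg)
  rw [Nat.sub_self, setIntegral_congr_set (hcube_zero n)] at key
  have ip : ∀ c, Integrable (fun x => max (f x - c) 0) (volume.restrict (Q0 n)) := fun c =>
    Integrable.pos_part (hf.1.sub (integrable_const c))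
  have id : Integrable (fun x => |f x - g x|) (volume.restrict (Q0 n)) := (hf.1.sub hgi).abs
  have ie : Integrable (fun x => 2 * |f x - g x| + 2 * (η/4)) (volume.restrict (Q0 n)) :=
    (id.const_mul 2).add (integrable_const _)
  have i0 : Integrable (fun x => 2 ^ (n - 1) * ε * lam / (lam - mu) * max (f x - mu) 0 +
      (2 * |f x - g x| + 2 * (η / 4))) (volume.restrict (Q0 n)) := ((ip mu).const_mul _).add ie
  rw [integral_sub i0 (ip lam),
      integral_add ((ip mu).const_mul _) ie, integral_const_mul,
      integral_add (id.const_mul 2) (integrable_const _), integral_const_mul,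
      setIntegral_const, Measure.real, hQv, one_smul] at key
  simp only [Real.norm_eq_abs] at hfg
  linarith

lemma rearr_ident {n : ℕ} {f : (Fin n → ℝ) → ℝ} {g : ℝ → ℝ} (hfi : IntegrableOn f (Q0 n))
    (h0 : ∀ x ∈ Q0 n, 0 ≤ f x) (hg : IsRearrangement (fun x => |f x|) g) :
    ProbabilityTheory.IdentDistrib f g (volume.restrict (Q0 n)) (volume.restrict (Ioc (0:ℝ) 1)) := by
  have hQm : MeasurableSet (Q0 n) := measurableSet_Icc
  have hgm : AEMeasurable g (volume.restrict (Ioc (0:ℝ) 1)) :=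
    aemeasurable_restrict_of_antitoneOn measurableSet_Ioc hg.1
  have hQv : volume (Q0 n) = 1 := by
    have := Q0_real n
    rwa [ENNReal.toReal_eq_one_iff] at this
  refine ⟨hfi.aemeasurable, hgm, ?_⟩
  have : IsProbabilityMeasure (volume.restrict (Q0 n)) := ⟨by simpa using hQv⟩
  have : IsProbabilityMeasure (volume.restrict (Ioc (0:ℝ) 1)) := ⟨by simp⟩
  have := Measure.isProbabilityMeasure_map hfi.aemeasurable
  have := Measure.isProbabilityMeasure_map hgm
  apply Measure.ext_of_Iic
  intro a
  rw [← compl_Ioi, prob_compl_eq_one_sub measurableSet_Ioi, prob_compl_eq_one_sub measurableSet_Ioi]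
  congr 1
  rw [Measure.map_apply_of_aemeasurable hfi.aemeasurable measurableSet_Ioi,
    Measure.map_apply_of_aemeasurable hgm measurableSet_Ioi,
    Measure.restrict_apply' hQm, Measure.restrict_apply' measurableSet_Ioc]
  have e1 : f ⁻¹' Ioi a ∩ Q0 n = {x ∈ Q0 n | a < |f x|} := by
    ext x
    simp only [mem_inter_iff, mem_preimage, mem_Ioi, mem_ofPred_eq]
    constructor
    · rintro ⟨h1, h2⟩; exact ⟨h2, by rwa [abs_of_nonneg (h0 x h2)]⟩
    · rintro ⟨h1, h2⟩; exact ⟨by rwa [abs_of_nonneg (h0 x h1)] at h2, h1⟩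
  have e2 : g ⁻¹' Ioi a ∩ Ioc 0 1 = {t ∈ Ioc (0:ℝ) 1 | a < g t} := by
    ext x; simp [and_comm]
  rw [e1, e2]
  exact (hg.2.2 a).symm

lemma phi_le {g : ℝ → ℝ} (hg : IntegrableOn g (Ioc 0 1)) {s : ℝ} (hs : s ∈ Ioc (0:ℝ) 1) (mu : ℝ) :
    ∫ u in Ioc 0 s, g u ≤ s * mu + ∫ u in Ioc 0 1, max (g u - mu) 0 := by
  have hsub : Ioc 0 s ⊆ Ioc (0:ℝ) 1 := Ioc_subset_Ioc_right hs.2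
  have hgs := hg.mono_set hsub
  have ip : IntegrableOn (fun u => max (g u - mu) 0) (Ioc 0 1) :=
    Integrable.pos_part (hg.sub (integrable_const _))
  have h1 : ∫ u in Ioc 0 s, (g u - mu) ≤ ∫ u in Ioc 0 1, max (g u - mu) 0 :=
    calc _ ≤ ∫ u in Ioc 0 s, max (g u - mu) 0 :=
          integral_mono (hgs.sub (integrable_const _)) (ip.mono_set hsub) fun x => le_max_left _ _
      _ ≤ _ := setIntegral_mono_set ip
          (Filter.Eventually.of_forall fun x => le_max_right _ _) hsub.eventuallyLE
  rw [integral_sub hgs (integrable_const _), setIntegral_const] at h1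
  simp [hs.1.le] at h1
  linarith

lemma phi_eq {g : ℝ → ℝ} (hg : IntegrableOn g (Ioc 0 1)) (ha : AntitoneOn g (Ioc 0 1))
    {s : ℝ} (hs : s ∈ Ioc (0:ℝ) 1) :
    ∫ u in Ioc 0 s, g u = s * g s + ∫ u in Ioc 0 1, max (g u - g s) 0 := by
  have hsub : Ioc 0 s ⊆ Ioc (0:ℝ) 1 := Ioc_subset_Ioc_right hs.2
  have hgs := hg.mono_set hsub
  have h1 : ∫ u in Ioc 0 1, max (g u - g s) 0 = ∫ u in Ioc 0 s, max (g u - g s) 0 := by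
    apply setIntegral_eq_of_subset_of_forall_sdiff_eq_zero measurableSet_Ioc hsub
    rintro x ⟨hx, hx'⟩
    have : s ≤ x := by
      by_contra h
      exact hx' ⟨hx.1, (not_le.1 h).le⟩
    exact max_eq_right (sub_nonpos.2 (ha hs hx this))
  have h2 : ∫ u in Ioc 0 s, max (g u - g s) 0 = ∫ u in Ioc 0 s, (g u - g s) := by
    apply setIntegral_congr_fun measurableSet_Ioc
    intro x hx
    exact max_eq_left (sub_nonneg.2 (ha (hsub hx) hs hx.2))
  rw [h1, h2, integral_sub hgs (integrable_const _), setIntegral_const]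
  simp [hs.1.le]

lemma final_iter {F : ℝ → ℝ} {p c : ℝ} (hp : 1 < p) (hc : c = (p-1) ^ (p-1) / p ^ p)
    (hF1 : 0 ≤ F 1)
    (hanti : ∀ s ∈ Ioc (0:ℝ) 1, ∀ t ∈ Ioc (0:ℝ) 1, s ≤ t → F t ≤ F s)
    (hstep : ∀ s ∈ Ioc (0:ℝ) 1, ∀ t ∈ Ioc (0:ℝ) 1, s * F s ≤ s * F t + c * (t * F t)) :
    ∀ t ∈ Ioc (0:ℝ) 1, F t ≤ p / (p - 1) * F 1 * t ^ (-p⁻¹) := by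
  have hp1 : 0 < p - 1 := by linarith
  have hp0 : 0 < p := by linarith
  set a := p / (p - 1) with ha
  have ha1 : 1 < a := by rw [ha, one_lt_div hp1]; linarith
  have ha0 : 0 < a := by linarith
  set q := a ^ (-p) with hq
  have hq0 : 0 < q := rpow_pos_of_pos ha0 _
  have hq1 : q < 1 := rpow_lt_one_of_one_lt_of_neg ha1 (by linarith)
  have hcq : c = (a - 1) * q := by
    have e : a - 1 = (p - 1)⁻¹ := by rw [ha]; field_simp; ring
    rw [hc, e, hq, ha, rpow_neg (by positivity), div_rpow hp0.le hp1.le, inv_div,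
      rpow_sub hp1, rpow_one]
    field_simp
  have hmem : ∀ k : ℕ, q ^ k ∈ Ioc (0:ℝ) 1 := fun k => ⟨by positivity, pow_le_one₀ hq0.le hq1.le⟩
  have hk : ∀ k : ℕ, F (q ^ k) ≤ a ^ k * F 1 := by
    intro k
    induction k with
    | zero => simp
    | succ k ih =>
      have h := hstep _ (hmem (k+1)) _ (hmem k)
      rw [hcq] at h
      have h2 : q ^ (k+1) * F (q ^ (k+1)) ≤ q ^ (k+1) * (a * F (q ^ k)) := by
        refine h.trans (le_of_eq ?_)
        rw [pow_succ]; ring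
      have h3 := le_of_mul_le_mul_left h2 (hmem (k+1)).1
      calc _ ≤ _ := h3
        _ ≤ a * (a ^ k * F 1) := by gcongr
        _ = _ := by rw [pow_succ]; ring
  intro t ht
  obtain ⟨k, hk1, hk2⟩ := exists_nat_pow_near_of_lt_one ht.1 ht.2 hq0 hq1
  have h1 := (hanti _ (hmem (k+1)) t ht hk1.le).trans (hk (k+1))
  refine h1.trans ?_
  have h2 : a ^ k ≤ t ^ (-p⁻¹) := by
    have e : a ^ k = (q ^ k) ^ (-p⁻¹) := by
      rw [hq, ← rpow_natCast, ← rpow_natCast, ← rpow_mul ha0.le, ← rpow_mul ha0.le]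
      congr 1
      field_simp
    rw [e]
    exact rpow_le_rpow_of_nonpos ht.1 hk2 (by simp [hp0.le])
  calc a ^ (k+1) * F 1 = a * F 1 * a ^ k := by rw [pow_succ]; ring
    _ ≤ _ := by gcongr

/-- **Theorem 5.** If `f ∈ GR_𝒟(Q₀,ε)` with `ε ∈ (0, 1/2ⁿ⁻¹)` and `p > 1` satisfies
`pᵖ/(p−1)^{p−1} = 1/(2ⁿ⁻¹ε)`, then `f**(t) ≤ (p/(p−1)) f_{Q₀} t^{−1/p}` for all `t ∈ (0,1]`. -/
theorem GR_power_bound (n : ℕ) (hn : 1 ≤ n)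
    (ε : ℝ) (hε : ε ∈ Set.Ioo 0 (1 / 2 ^ (n - 1)))
    (f : (Fin n → ℝ) → ℝ) (hf : GRcond f ε)
    (p : ℝ) (hp : 1 < p)
    (hpeq : p ^ p / (p - 1) ^ (p - 1) = 1 / (2 ^ (n - 1) * ε))
    (fstar : ℝ → ℝ) (hfs : IsRearrangement (fun x => |f x|) fstar) :
    ∀ t ∈ Set.Ioc (0:ℝ) 1,
      hardyAvg fstar t ≤ p / (p - 1) * avgOn f (Q0 n) * t ^ (-p⁻¹) := by
  have hε0 := hε.1
  have hid := rearr_ident hf.1 hf.2.1 hfs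
  have hgi : IntegrableOn fstar (Ioc 0 1) := hid.integrable_snd hf.1
  have hint : ∫ x in Q0 n, f x = ∫ u in Ioc (0:ℝ) 1, fstar u := hid.integral_eq
  have hpsi : ∀ mu : ℝ, ∫ x in Q0 n, max (f x - mu) 0 = ∫ u in Ioc (0:ℝ) 1, max (fstar u - mu) 0 :=
    fun mu => (hid.comp (u := fun y => max (y - mu) 0) (by fun_prop)).integral_eq
  have hpsi0 : ∀ mu : ℝ, 0 ≤ ∫ u in Ioc (0:ℝ) 1, max (fstar u - mu) 0 := fun mu =>
    integral_nonneg fun x => le_max_right _ _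
  have hF : ∀ t ∈ Ioc (0:ℝ) 1, t * hardyAvg fstar t = ∫ u in Ioc (0:ℝ) t, fstar u := by
    intro t ht
    have := ht.1.ne'
    rw [hardyAvg]; field_simp
  have hF1 : hardyAvg fstar 1 = ∫ x in Q0 n, f x := by
    rw [hint, hardyAvg, inv_one, one_mul]
  have hA : avgOn f (Q0 n) = hardyAvg fstar 1 := by
    rw [hF1, avgOn, Q0_real, inv_one, one_mul]
  have hF10 : 0 ≤ hardyAvg fstar 1 := by
    rw [hF1]; exact setIntegral_nonneg measurableSet_Icc hf.2.1
  have hanti : ∀ s ∈ Ioc (0:ℝ) 1, ∀ t ∈ Ioc (0:ℝ) 1, s ≤ t →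
      hardyAvg fstar t ≤ hardyAvg fstar s := by
    intro s hs t ht hst
    have h1 := phi_eq hgi hfs.1 hs
    have h2 := phi_le hgi ht (fstar s)
    have h3 := hpsi0 (fstar s)
    rw [← hF s hs] at h1
    rw [← hF t ht] at h2
    have h4 : s * (fstar s) ≤ s * hardyAvg fstar s := by linarith
    have h5 := le_of_mul_le_mul_left h4 hs.1
    have h6 : t * hardyAvg fstar t ≤ t * hardyAvg fstar s := by nlinarith
    exact le_of_mul_le_mul_left h6 ht.1
  rw [hA]
  refine final_iter (c := 2 ^ (n-1) * ε) hp ?_ hF10 hanti ?_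
  · rw [← inv_div, hpeq, one_div, inv_inv]
  intro s hs t ht
  have one_mem : (1:ℝ) ∈ Ioc (0:ℝ) 1 := ⟨one_pos, le_rfl⟩
  have hl := hanti t ht 1 one_mem ht.2
  have h1 := phi_le hgi hs (hardyAvg fstar t)
  have h2 := phi_eq hgi hfs.1 ht
  rw [← hF s hs] at h1
  rw [← hF t ht] at h2
  have h0 := hpsi0 (fstar t)
  have ht0 := ht.1
  obtain ⟨lam, hlam⟩ : ∃ lam, lam = hardyAvg fstar t := ⟨_, rfl⟩
  rw [← hlam] at h1 h2 hl ⊢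
  have hlam0 : 0 ≤ lam := hF10.trans hl
  rcases lt_or_ge (fstar t) lam with h | h
  · have hcore := core hn hε0 hf hlam0 h (by rw [← hF1]; exact hl)
    rw [hpsi, hpsi] at hcore
    have e : ∫ u in Ioc (0:ℝ) 1, max (fstar u - fstar t) 0 = t * (lam - fstar t) := by linarith
    rw [e] at hcore
    have : 0 < lam - fstar t := by linarith
    have e2 : 2 ^ (n-1) * ε * lam / (lam - fstar t) * (t * (lam - fstar t)) =
        2 ^ (n-1) * ε * (t * lam) := by field_simp
    linarith
  · have : fstar t = lam := by
      apply le_antisymm _ h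
      exact le_of_mul_le_mul_left (by linarith) ht0
    rw [this] at h2
    have : 0 ≤ 2 ^ (n-1) * ε * (t * lam) := by positivity
    linarith
end
end

section
/- Let f ∈ GR_D(Q0,ε) for some ε ∈ (0, 1/2^{n−1}), and let p > 1 be the unique real number with p^p/(p−1)^{p−1} = 1/(2^{n−1}ε). Then f ∈ L^q(Q0) for every q ∈ [1, p), i.e. ∫_{Q0} f(x)^q dx < ∞ for every such q. -/
open MeasureTheory Set Real

noncomputable section

open Filter Topology

/-- half-open dyadic cube -/
def hc (n k : ℕ) (m : Fin n → ℕ) : Set (Fin n → ℝ) :=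
  Set.pi univ fun i => Ico ((m i : ℝ) / 2 ^ k) (((m i : ℝ) + 1) / 2 ^ k)

/-- closed dyadic cube -/
def cc (n k : ℕ) (m : Fin n → ℕ) : Set (Fin n → ℝ) :=
  Set.Icc (fun i => (m i : ℝ) / 2 ^ k) (fun i => ((m i : ℝ) + 1) / 2 ^ k)

lemma mem_hc {n k : ℕ} {m : Fin n → ℕ} {x : Fin n → ℝ} :
    x ∈ hc n k m ↔ ∀ i, (m i : ℝ) ≤ 2 ^ k * x i ∧ 2 ^ k * x i < m i + 1 := by
  have h2 : (0:ℝ) < 2 ^ k := by positivity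
  simp only [hc, Set.mem_pi, mem_univ, true_implies, mem_Ico]
  refine forall_congr' fun i => ?_
  rw [div_le_iff₀ h2, lt_div_iff₀ h2, mul_comm (x i)]

lemma hc_ae (n k : ℕ) (m : Fin n → ℕ) : hc n k m =ᵐ[volume] cc n k m :=
  Measure.univ_pi_Ico_ae_eq_Icc

lemma meas_hc (n k : ℕ) (m : Fin n → ℕ) : MeasurableSet (hc n k m) :=
  MeasurableSet.univ_pi fun _ => measurableSet_Ico

lemma vol_cc (n k : ℕ) (m : Fin n → ℕ) :
    (volume (cc n k m)).toReal = ((2:ℝ) ^ k)⁻¹ ^ n := by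
  unfold cc
  rw [Real.volume_Icc_pi_toReal]
  · simp only [← sub_div]
    simp
  · intro i
    simp only
    gcongr
    linarith

lemma vol_cc_ne (n k : ℕ) (m : Fin n → ℕ) : volume (cc n k m) ≠ ⊤ :=
  (isCompact_Icc (a := fun i : Fin n => (m i : ℝ) / 2 ^ k)).measure_lt_top.ne

lemma cc_sub {n k : ℕ} {m : Fin n → ℕ} (hm : ∀ i, m i < 2 ^ k) : cc n k m ⊆ Q0 n := by
  have h2 : (0:ℝ) < 2 ^ k := by positivity
  refine Icc_subset_Icc (fun i => ?_) (fun i => ?_)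
  · simp only [Pi.zero_apply]; positivity
  · simp only [Pi.one_apply]
    rw [div_le_one h2]
    exact_mod_cast hm i

lemma mem_hc_iff_floor {n k : ℕ} {m : Fin n → ℕ} {x : Fin n → ℝ} (h : x ∈ hc n k m) :
    (fun i => ⌊(2:ℝ) ^ k * x i⌋₊) = m := by
  rw [mem_hc] at h
  funext i
  have h0 : (0:ℝ) ≤ 2 ^ k * x i := le_trans (by positivity) (h i).1
  exact (Nat.floor_eq_iff h0).2 (h i)

lemma hc_disj {n k : ℕ} {m m' : Fin n → ℕ} (h : m ≠ m') : Disjoint (hc n k m) (hc n k m') := by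
  rw [Set.disjoint_left]
  intro x hx hx'
  exact h ((mem_hc_iff_floor hx).symm.trans (mem_hc_iff_floor hx'))

lemma hc_children {n k : ℕ} (m : Fin n → ℕ) :
    hc n k m = ⋃ σ : Fin n → Fin 2, hc n (k+1) (fun i => 2 * m i + (σ i : ℕ)) := by
  ext x
  simp only [mem_iUnion, mem_hc]
  constructor
  · intro h
    refine ⟨fun i => if (2:ℝ) ^ (k+1) * x i < 2 * m i + 1 then 0 else 1, fun i => ?_⟩
    have := h i
    have e : (2:ℝ) ^ (k+1) * x i = 2 * (2 ^ k * x i) := by ring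
    beta_reduce
    split_ifs with h1
    · push_cast
      simp only [Fin.val_zero, Nat.cast_zero]
      constructor <;> linarith
    · push_cast
      simp only [Fin.val_one, Nat.cast_one]
      constructor <;> linarith
  · rintro ⟨σ, h⟩ i
    have := h i
    have e : (2:ℝ) ^ (k+1) * x i = 2 * (2 ^ k * x i) := by ring
    push_cast at this
    have h1 : ((σ i : ℕ) : ℝ) ≤ 1 := by
      have := (σ i).2
      exact_mod_cast (by omega : (σ i : ℕ) ≤ 1)
    have h0 : (0:ℝ) ≤ ((σ i : ℕ) : ℝ) := by positivity
    constructor <;> linarith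

lemma child_lt {n k : ℕ} {m : Fin n → ℕ} (hm : ∀ i, m i < 2 ^ k) (σ : Fin n → Fin 2) :
    ∀ i, 2 * m i + (σ i : ℕ) < 2 ^ (k+1) := by
  intro i
  have := hm i
  have := (σ i).2
  rw [pow_succ]; omega

lemma child_disj {n k : ℕ} (m : Fin n → ℕ) :
    Pairwise (Function.onFun Disjoint
      fun σ : Fin n → Fin 2 => hc n (k+1) (fun i => 2 * m i + (σ i : ℕ))) := by
  intro σ τ h
  refine hc_disj fun h' => h ?_
  funext i
  have := congrFun h' i
  apply Fin.ext
  omega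

lemma avg_mul {n k : ℕ} (f : (Fin n → ℝ) → ℝ) (m : Fin n → ℕ) :
    ∫ x in cc n k m, f x = ((2:ℝ) ^ k)⁻¹ ^ n * avgOn f (cc n k m) := by
  unfold avgOn
  rw [vol_cc, ← mul_assoc, mul_inv_cancel₀ (by positivity), one_mul]

lemma osc_bound {n k : ℕ} {f : (Fin n → ℝ) → ℝ} {ε : ℝ} (hε : 0 < ε) (hf : GRcond f ε)
    {m : Fin n → ℕ} (hm : ∀ i, m i < 2 ^ k) {l : ℝ} (hl : avgOn f (cc n k m) ≤ l) :
    ∫⁻ x in hc n k m, ENNReal.ofReal (f x - l) ≤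
      ENNReal.ofReal (ε / 2 * l * ((2:ℝ) ^ k)⁻¹ ^ n) := by
  obtain ⟨hi, -, hosc⟩ := hf
  have hosc := hosc (cc n k m) ⟨k, m, hm, rfl⟩
  set a := avgOn f (cc n k m) with ha
  have hi' : IntegrableOn f (cc n k m) := hi.mono_set (cc_sub hm)
  have hc1 : IntegrableOn (fun _ : Fin n → ℝ => a) (cc n k m) :=
    integrableOn_const (vol_cc_ne n k m)
  have hia : IntegrableOn (fun x => f x - a) (cc n k m) := hi'.sub hc1
  rw [setLIntegral_congr (hc_ae n k m)]
  calc ∫⁻ x in cc n k m, ENNReal.ofReal (f x - l)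
      ≤ ∫⁻ x in cc n k m, ENNReal.ofReal (max (f x - a) 0) := by
        refine lintegral_mono fun x => ENNReal.ofReal_le_ofReal ?_
        exact le_trans (by linarith) (le_max_left _ _)
    _ = ENNReal.ofReal (∫ x in cc n k m, max (f x - a) 0) := by
        rw [ofReal_integral_eq_lintegral_ofReal hia.pos_part]
        exact Eventually.of_forall fun x => le_max_right _ _
    _ ≤ _ := by
        apply ENNReal.ofReal_le_ofReal
        have e : ∀ x, max (f x - a) 0 = 1 / 2 * (|f x - a| + (f x - a)) := by
          intro x
          rcases le_total 0 (f x - a) with h | h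
          · rw [max_eq_left h, abs_of_nonneg h]; ring
          · rw [max_eq_right h, abs_of_nonpos h]; ring
        simp only [e]
        rw [integral_const_mul, integral_add hia.abs hia, integral_sub hi' hc1, avg_mul f m, ← ha]
        have : oscOn f (cc n k m) = (((2:ℝ) ^ k)⁻¹ ^ n)⁻¹ * ∫ x in cc n k m, |f x - a| := by
          unfold oscOn; rw [vol_cc]
        rw [this] at hosc
        have hv : (0:ℝ) < ((2:ℝ) ^ k)⁻¹ ^ n := by positivity
        rw [inv_mul_le_iff₀ hv] at hosc
        rw [setIntegral_const, measureReal_def, vol_cc, smul_eq_mul]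
        have : ((2:ℝ) ^ k)⁻¹ ^ n * (ε * a) ≤ ((2:ℝ) ^ k)⁻¹ ^ n * (ε * l) := by gcongr
        linarith

/-- level set of dyadic averages -/
def GS {n : ℕ} (f : (Fin n → ℝ) → ℝ) (l : ℝ) (K : ℕ) : Set (Fin n → ℝ) :=
  {x | l < avgOn f (cc n K (fun i => ⌊(2:ℝ) ^ K * x i⌋₊))}

lemma meas_GS {n : ℕ} (f : (Fin n → ℝ) → ℝ) (l : ℝ) (K : ℕ) : MeasurableSet (GS f l K) := by
  have h1 : Measurable (fun x : Fin n → ℝ => (fun i => ⌊(2:ℝ) ^ K * x i⌋₊)) := by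
    refine measurable_pi_lambda _ fun i => ?_
    exact Nat.measurable_floor.comp ((measurable_pi_apply i).const_mul _)
  have h2 : MeasurableSet {m : Fin n → ℕ | l < avgOn f (cc n K m)} := Set.Countable.measurableSet (Set.to_countable _)
  exact h1 h2

lemma main_ind {n : ℕ} {f : (Fin n → ℝ) → ℝ} {ε : ℝ} (hε : 0 < ε) (hf : GRcond f ε)
    {l μ : ℝ} (hl : 0 < l) (hμ : μ < l) (d : ℕ) :
    ∀ (k : ℕ) (m : Fin n → ℕ), (∀ i, m i < 2 ^ k) → avgOn f (cc n k m) ≤ l →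
    ∫⁻ x in hc n k m ∩ GS f l (k+d), ENNReal.ofReal (f x - l) ≤
      ENNReal.ofReal (ε / 2 * 2 ^ n * (l / (l - μ))) *
        ∫⁻ x in hc n k m, ENNReal.ofReal (f x - μ) := by
  have hlm : 0 < l - μ := by linarith
  induction d with
  | zero =>
    intro k m hm ha
    have : hc n k m ∩ GS f l (k+0) = ∅ := by
      ext x
      simp only [mem_inter_iff, mem_empty_iff_false, iff_false, not_and]
      intro hx hx'
      rw [GS, mem_ofPred_eq, add_zero, mem_hc_iff_floor hx] at hx'
      linarith
    rw [this]; simp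
  | succ d ih =>
    intro k m hm ha
    by_cases hex : ∃ σ : Fin n → Fin 2, l < avgOn f (cc n (k+1) (fun i => 2 * m i + (σ i : ℕ)))
    · obtain ⟨σ, hσ⟩ := hex
      set m' : Fin n → ℕ := fun i => 2 * m i + (σ i : ℕ) with hm'
      have hsub : hc n (k+1) m' ⊆ hc n k m := by
        rw [hc_children m]; exact subset_iUnion (fun σ : Fin n → Fin 2 => hc n (k+1) (fun i => 2 * m i + (σ i : ℕ))) σ
      have hi' : IntegrableOn f (cc n (k+1) m') := hf.1.mono_set (cc_sub (child_lt hm σ))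
      have hc1 : IntegrableOn (fun _ : Fin n → ℝ => μ) (cc n (k+1) m') :=
        integrableOn_const (vol_cc_ne n (k+1) m')
      have key : ENNReal.ofReal ((l - μ) * ((2:ℝ) ^ (k+1))⁻¹ ^ n) ≤
          ∫⁻ x in hc n k m, ENNReal.ofReal (f x - μ) := by
        calc ENNReal.ofReal ((l - μ) * ((2:ℝ) ^ (k+1))⁻¹ ^ n)
            ≤ ENNReal.ofReal (∫ x in cc n (k+1) m', (f x - μ)) := by
              apply ENNReal.ofReal_le_ofReal
              rw [integral_sub hi' hc1, avg_mul, setIntegral_const, measureReal_def, vol_cc,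
                smul_eq_mul, ← mul_sub, mul_comm]
              gcongr
          _ ≤ ENNReal.ofReal (∫ x in cc n (k+1) m', max (f x - μ) 0) := by
              apply ENNReal.ofReal_le_ofReal
              exact integral_mono (hi'.sub hc1) (hi'.sub hc1).pos_part fun x => le_max_left _ _
          _ = ∫⁻ x in cc n (k+1) m', ENNReal.ofReal (max (f x - μ) 0) := by
              exact ofReal_integral_eq_lintegral_ofReal (hi'.sub hc1).pos_part
                (Eventually.of_forall fun x => le_max_right _ _)
          _ = ∫⁻ x in hc n (k+1) m', ENNReal.ofReal (f x - μ) := by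
              rw [setLIntegral_congr (hc_ae n (k+1) m')]
              simp
          _ ≤ _ := lintegral_mono_set hsub
      calc ∫⁻ x in hc n k m ∩ GS f l (k+(d+1)), ENNReal.ofReal (f x - l)
          ≤ ∫⁻ x in hc n k m, ENNReal.ofReal (f x - l) := lintegral_mono_set inter_subset_left
        _ ≤ ENNReal.ofReal (ε / 2 * l * ((2:ℝ) ^ k)⁻¹ ^ n) := osc_bound hε hf hm ha
        _ = ENNReal.ofReal (ε / 2 * 2 ^ n * (l / (l - μ))) *
              ENNReal.ofReal ((l - μ) * ((2:ℝ) ^ (k+1))⁻¹ ^ n) := by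
            rw [← ENNReal.ofReal_mul (by positivity)]
            congr 1
            rw [pow_succ, mul_inv, mul_pow, inv_pow 2 n]
            field_simp
        _ ≤ _ := by gcongr
    · push Not at hex
      have e1 : hc n k m ∩ GS f l (k+(d+1)) = ⋃ σ : Fin n → Fin 2,
          (hc n (k+1) (fun i => 2 * m i + (σ i : ℕ)) ∩ GS f l (k+1+d)) := by
        rw [hc_children m, iUnion_inter, show k + (d+1) = k+1+d by ring]
      rw [e1, lintegral_iUnion (fun σ => (meas_hc _ _ _).inter (meas_GS _ _ _))
        (fun σ τ h => (child_disj m h).mono inter_subset_left inter_subset_left),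
        hc_children m, lintegral_iUnion (fun σ => meas_hc _ _ _) (child_disj m),
        ← ENNReal.tsum_mul_left]
      exact ENNReal.tsum_le_tsum fun σ => ih (k+1) _ (child_lt hm σ) (hex σ)

lemma leb_diff {n : ℕ} {f : (Fin n → ℝ) → ℝ} (hf : IntegrableOn f (Q0 n)) :
    ∀ᵐ x ∂(volume : Measure (Fin n → ℝ)), x ∈ hc n 0 0 →
      Tendsto (fun K => avgOn f (cc n K (fun i => ⌊(2:ℝ) ^ K * x i⌋₊))) atTop (𝓝 (f x)) := by
  have hQ : MeasurableSet (Q0 n) := measurableSet_Icc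
  have hint : Integrable ((Q0 n).indicator f) := hf.integrable_indicator hQ
  filter_upwards [IsUnifLocDoublingMeasure.ae_tendsto_average volume
    hint.locallyIntegrable 1] with x hx hxc
  have hx01 : ∀ i, 0 ≤ x i ∧ x i < 1 := by
    intro i; simpa using mem_hc.1 hxc i
  have hxQ : x ∈ Q0 n := ⟨fun i => (hx01 i).1, fun i => (hx01 i).2.le⟩
  have hball : ∀ (K : ℕ) (m : Fin n → ℕ), cc n K m =
      Metric.closedBall (fun i => ((m i : ℝ) + 1/2) / 2 ^ K) (1/2/2^K) := by
    intro K m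
    rw [closedBall_pi _ (by positivity), cc, ← pi_univ_Icc]
    congr 1
    funext i
    rw [Real.closedBall_eq_Icc]
    congr 1 <;> ring
  have hmem : ∀ K, x ∈ hc n K (fun i => ⌊(2:ℝ) ^ K * x i⌋₊) := by
    intro K
    rw [mem_hc]
    intro i
    have h0 : (0:ℝ) ≤ 2 ^ K * x i := mul_nonneg (by positivity) (hx01 i).1
    exact ⟨Nat.floor_le h0, Nat.lt_floor_add_one _⟩
  have hlt : ∀ K i, ⌊(2:ℝ) ^ K * x i⌋₊ < 2 ^ K := by
    intro K i
    have h0 : (0:ℝ) ≤ 2 ^ K * x i := mul_nonneg (by positivity) (hx01 i).1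
    rw [Nat.floor_lt h0]
    push_cast
    have h2 : (0:ℝ) < 2 ^ K := by positivity
    nlinarith [(hx01 i).2]
  have := hx (l := atTop) (fun K : ℕ => fun i => ((⌊(2:ℝ) ^ K * x i⌋₊ : ℝ) + 1/2) / 2 ^ K)
    (fun K => 1/2/2^K) ?_ ?_
  · rw [indicator_of_mem hxQ] at this
    refine this.congr fun K => ?_
    rw [← hball K (fun i => ⌊(2:ℝ) ^ K * x i⌋₊), setAverage_eq, avgOn, smul_eq_mul, measureReal_def]
    congr 1
    refine setIntegral_congr_fun measurableSet_Icc fun y hy => ?_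
    exact indicator_of_mem (cc_sub (hlt K) hy) f
  · refine tendsto_nhdsWithin_iff.2 ⟨?_, Eventually.of_forall fun K => ?_⟩
    · have := (tendsto_pow_atTop_nhds_zero_of_lt_one (r := (1/2:ℝ)) (by norm_num) (by norm_num)).const_mul (1/2)
      simp only [mul_zero] at this
      refine this.congr fun K => ?_
      rw [one_div_pow]; ring
    · show (0:ℝ) < 1/2/2^K
      positivity
  · refine Eventually.of_forall fun K => ?_
    rw [one_mul, ← hball K (fun i => ⌊(2:ℝ) ^ K * x i⌋₊), cc, ← pi_univ_Icc]
    intro i _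
    exact Ico_subset_Icc_self (hmem K i trivial)

lemma hc0_ae (n : ℕ) : hc n 0 0 =ᵐ[volume] Q0 n := by
  have := hc_ae n 0 0
  have e : cc n 0 0 = Q0 n := by
    unfold cc Q0; congr 1 <;> funext i <;> simp
  rwa [e] at this

lemma cc0 (n : ℕ) : cc n 0 0 = Q0 n := by
  unfold cc Q0; congr 1 <;> funext i <;> simp

lemma H_step {n : ℕ} {f : (Fin n → ℝ) → ℝ} {ε : ℝ} (hε : 0 < ε) (hf : GRcond f ε)
    {l μ : ℝ} (hl : 0 < l) (hμ : μ < l) (ha : avgOn f (Q0 n) ≤ l) :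
    ∫⁻ x in Q0 n, ENNReal.ofReal (f x - l) ≤
      ENNReal.ofReal (ε / 2 * 2 ^ n * (l / (l - μ))) *
        ∫⁻ x in Q0 n, ENNReal.ofReal (f x - μ) := by
  rw [← setLIntegral_congr (hc0_ae n), ← setLIntegral_congr (hc0_ae n)]
  have hfm : AEMeasurable f (volume.restrict (hc n 0 0)) := by
    rw [Measure.restrict_congr_set (hc0_ae n)]
    exact hf.1.aemeasurable
  have hm : ∀ K, AEMeasurable ((GS f l K).indicator fun x => ENNReal.ofReal (f x - l))
      (volume.restrict (hc n 0 0)) := fun K =>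
    ((hfm.sub_const l).ennreal_ofReal).indicator (meas_GS f l K)
  calc ∫⁻ x in hc n 0 0, ENNReal.ofReal (f x - l)
      ≤ ∫⁻ x in hc n 0 0, liminf (fun K => (GS f l K).indicator (fun x => ENNReal.ofReal (f x - l)) x) atTop := by
        refine lintegral_mono_ae ?_
        rw [ae_restrict_iff' (meas_hc _ _ _)]
        filter_upwards [leb_diff hf.1] with x hx hxc
        rcases le_or_gt (f x) l with h | h
        · rw [ENNReal.ofReal_of_nonpos (by linarith)]; exact zero_le
        · refine le_liminf_of_le (by isBoundedDefault) ?_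
          filter_upwards [(hx hxc).eventually_const_lt h] with K hK
          rw [indicator_of_mem (show x ∈ GS f l K from hK)]
    _ ≤ liminf (fun K => ∫⁻ x in hc n 0 0, (GS f l K).indicator (fun x => ENNReal.ofReal (f x - l)) x) atTop :=
        lintegral_liminf_le' hm
    _ ≤ _ := by
        refine liminf_le_of_le (by isBoundedDefault) fun b hb => ?_
        obtain ⟨K, hK⟩ := hb.exists
        refine hK.trans ?_
        rw [setLIntegral_indicator (meas_GS f l K), inter_comm]
        have := main_ind hε hf hl hμ K 0 0 (by simp) (by rwa [cc0])
        rwa [zero_add] at this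

lemma pt_bound {c l0 q : ℝ} (hc : 1 < c) (hl0 : 0 < l0) (hq : 1 ≤ q) {y : ℝ} (hy : 0 ≤ y) :
    ENNReal.ofReal (y ^ q) ≤ ENNReal.ofReal ((c * l0) ^ q) +
      ∑' k : ℕ, ENNReal.ofReal ((c * c * l0) ^ (q-1) * (c / (c-1)) * (c ^ (q-1)) ^ k) *
        ENNReal.ofReal (y - l0 * c ^ k) := by
  have hc0 : 0 < c := by linarith
  rcases le_total y (c * l0) with h | h
  · refine le_trans (ENNReal.ofReal_le_ofReal ?_) le_self_add
    exact Real.rpow_le_rpow hy h (by linarith)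
  · have hy0 : 0 < y := lt_of_lt_of_le (by positivity) h
    obtain ⟨k, hk1, hk2⟩ := exists_nat_pow_near (x := y / (c * l0)) (y := c)
      ((one_le_div (by positivity)).2 h) hc
    rw [le_div_iff₀ (by positivity)] at hk1
    rw [div_lt_iff₀ (by positivity)] at hk2
    refine le_trans ?_ le_add_self
    refine le_trans ?_ (ENNReal.le_tsum k)
    rw [← ENNReal.ofReal_mul (by have : 0 < c - 1 := by linarith
                                 positivity)]
    apply ENNReal.ofReal_le_ofReal
    have h1 : y ^ q = y ^ (q-1) * y := by
      rw [Real.rpow_sub_one hy0.ne']; field_simp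
    have h2 : y ^ (q-1) ≤ (c * c * l0) ^ (q-1) * (c ^ (q-1)) ^ k := by
      rw [← Real.rpow_natCast (c ^ (q-1)) k, ← Real.rpow_mul hc0.le, mul_comm (q-1),
        Real.rpow_mul hc0.le, Real.rpow_natCast, ← Real.mul_rpow (by positivity) (by positivity)]
      refine Real.rpow_le_rpow hy ?_ (by linarith)
      rw [pow_succ] at hk2
      nlinarith
    have h3 : y ≤ c / (c-1) * (y - l0 * c ^ k) := by
      have : 0 < c - 1 := by linarith
      rw [div_mul_eq_mul_div, le_div_iff₀ this]
      nlinarith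
    calc y ^ q = y ^ (q-1) * y := h1
      _ ≤ ((c * c * l0) ^ (q-1) * (c ^ (q-1)) ^ k) * (c / (c-1) * (y - l0 * c ^ k)) := by
          gcongr
      _ = _ := by ring

/-- **Corollary 1.** If `f ∈ GR_𝒟(Q₀,ε)` with `ε ∈ (0, 1/2ⁿ⁻¹)` and `p > 1` satisfies
`pᵖ/(p−1)^{p−1} = 1/(2ⁿ⁻¹ε)`, then `f ∈ L^q(Q₀)` for every `q ∈ [1,p)`. -/
theorem GR_integrability (n : ℕ) (hn : 1 ≤ n)
    (ε : ℝ) (hε : ε ∈ Set.Ioo 0 (1 / 2 ^ (n - 1)))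
    (f : (Fin n → ℝ) → ℝ) (hf : GRcond f ε)
    (p : ℝ) (hp : 1 < p)
    (hpeq : p ^ p / (p - 1) ^ (p - 1) = 1 / (2 ^ (n - 1) * ε)) :
    ∀ q ∈ Set.Ico (1:ℝ) p, IntegrableOn (fun x => f x ^ q) (Q0 n) := by
  rintro q ⟨hq1, hqp⟩
  have hε0 := hε.1
  have hp1 : 0 < p - 1 := by linarith
  set c := p / (p - 1) with hcdef
  have hc : 1 < c := (one_lt_div hp1).2 (by linarith)
  have hc0 : 0 < c := by linarith
  have hcm : c - 1 = 1 / (p - 1) := by rw [hcdef]; field_simp; ring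
  set l0 := |avgOn f (Q0 n)| + 1 with hl0def
  have hl0 : 0 < l0 := by positivity
  have hal : avgOn f (Q0 n) ≤ l0 := (le_abs_self _).trans (by linarith)
  set C := ε / 2 * 2 ^ n * (c / (c - 1)) with hC
  have hC0 : 0 ≤ C := by rw [hC, hcm]; positivity
  have hCc : C = c ^ (1 - p) := by
    have h2 : (2:ℝ) ^ n = 2 * 2 ^ (n-1) := by
      rw [← pow_succ', Nat.sub_add_cancel hn]
    have h3 : 2 ^ (n-1) * ε = (p-1) ^ (p-1) / p ^ p := by
      have := congrArg (·⁻¹) hpeq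
      simp only [inv_div, div_one] at this
      exact this.symm
    have h4 : C = (2 ^ (n-1) * ε) * (c / (c-1)) := by rw [hC, h2]; ring
    have hpp : 0 < p := by linarith
    rw [h4, h3, hcm, show (1 - p) = -(p-1) by ring, Real.rpow_neg hc0.le, hcdef,
      Real.div_rpow hpp.le hp1.le, inv_div]
    have h5 : p ^ p = p ^ (p-1) * p := by
      rw [Real.rpow_sub_one hpp.ne']; field_simp
    rw [h5]
    have : 0 < p ^ (p-1) := by positivity
    field_simp
  set H : ℕ → ENNReal := fun k => ∫⁻ x in Q0 n, ENNReal.ofReal (f x - l0 * c ^ k) with hH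
  have hstep : ∀ k, H (k+1) ≤ ENNReal.ofReal C * H k := by
    intro k
    have hk : 0 < l0 * c ^ k := by positivity
    have hlt : l0 * c ^ k < l0 * c ^ (k+1) := by
      rw [pow_succ, ← mul_assoc]; nlinarith
    have hge : l0 ≤ l0 * c ^ (k+1) := le_mul_of_one_le_right hl0.le (one_le_pow₀ hc.le)
    have := H_step hε0 hf (l := l0 * c ^ (k+1)) (μ := l0 * c ^ k) (by positivity) hlt
      (hal.trans hge)
    have e : l0 * c ^ (k+1) / (l0 * c ^ (k+1) - l0 * c ^ k) = c / (c - 1) := by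
      have : l0 * c ^ (k+1) - l0 * c ^ k = (l0 * c ^ k) * (c - 1) := by ring
      rw [this, pow_succ, ← mul_assoc, mul_div_mul_left _ _ hk.ne']
    rw [e] at this
    exact this
  have hpow : ∀ k, H k ≤ ENNReal.ofReal C ^ k * H 0 := by
    intro k
    induction k with
    | zero => simp
    | succ k ih =>
      calc H (k+1) ≤ ENNReal.ofReal C * H k := hstep k
        _ ≤ ENNReal.ofReal C * (ENNReal.ofReal C ^ k * H 0) := by gcongr
        _ = _ := by rw [pow_succ']; ring
  have hH0 : H 0 ≠ ⊤ := by
    have h1 : H 0 ≤ ∫⁻ x in Q0 n, ‖f x‖ₑ := by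
      refine lintegral_mono fun x => ?_
      rw [← ofReal_norm]
      apply ENNReal.ofReal_le_ofReal
      rw [Real.norm_eq_abs]
      have := le_abs_self (f x)
      simp only [pow_zero, mul_one]
      linarith
    exact (lt_of_le_of_lt h1 hf.1.2).ne
  have hfm : AEMeasurable f (volume.restrict (Q0 n)) := hf.1.aemeasurable
  refine ⟨(hfm.pow_const q).aestronglyMeasurable, ?_⟩
  rw [hasFiniteIntegral_iff_enorm]
  set D := (c * c * l0) ^ (q-1) * (c / (c-1)) with hD
  have hD0 : 0 ≤ D := by rw [hD, hcm]; positivity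
  have hQ : MeasurableSet (Q0 n) := measurableSet_Icc
  have hvol : volume (Q0 n) ≠ ⊤ := (isCompact_Icc (a := (0 : Fin n → ℝ))).measure_lt_top.ne
  have hbd : ∫⁻ x in Q0 n, ‖f x ^ q‖ₑ ≤ ENNReal.ofReal ((c * l0) ^ q) * volume (Q0 n) +
      ∑' k : ℕ, ENNReal.ofReal (D * (c ^ (q-1)) ^ k) * H k := by
    calc ∫⁻ x in Q0 n, ‖f x ^ q‖ₑ
        ≤ ∫⁻ x in Q0 n, (ENNReal.ofReal ((c * l0) ^ q) +
          ∑' k : ℕ, ENNReal.ofReal (D * (c ^ (q-1)) ^ k) * ENNReal.ofReal (f x - l0 * c ^ k)) := by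
          refine setLIntegral_mono' hQ fun x hx => ?_
          have h0 := hf.2.1 x hx
          rw [Real.enorm_eq_ofReal (Real.rpow_nonneg h0 q)]
          exact pt_bound hc hl0 hq1 h0
      _ = _ := by
          rw [lintegral_add_left measurable_const, setLIntegral_const, lintegral_tsum]
          · congr 1
            refine tsum_congr fun k => ?_
            rw [lintegral_const_mul' _ _ ENNReal.ofReal_ne_top]
          · intro k
            exact ((hfm.sub_const _).ennreal_ofReal).const_mul _
  refine lt_of_le_of_lt hbd (ENNReal.add_lt_top.2 ⟨ENNReal.mul_lt_top ENNReal.ofReal_lt_top hvol.lt_top, ?_⟩)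
  set r := c ^ (q - 1) * C with hr
  have hr0 : 0 ≤ r := by positivity
  have hr1 : r < 1 := by
    rw [hr, hCc, ← Real.rpow_add hc0]
    exact Real.rpow_lt_one_of_one_lt_of_neg hc (by linarith)
  have hle : ∑' k : ℕ, ENNReal.ofReal (D * (c ^ (q-1)) ^ k) * H k ≤
      ∑' k : ℕ, ENNReal.ofReal D * H 0 * ENNReal.ofReal r ^ k := by
    refine ENNReal.tsum_le_tsum fun k => ?_
    calc ENNReal.ofReal (D * (c ^ (q-1)) ^ k) * H k
        ≤ ENNReal.ofReal (D * (c ^ (q-1)) ^ k) * (ENNReal.ofReal C ^ k * H 0) := by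
          gcongr; exact hpow k
      _ = _ := by
          rw [hr, ENNReal.ofReal_mul hD0, ENNReal.ofReal_pow (by positivity),
            ENNReal.ofReal_mul (p := c ^ (q-1)) (by positivity), mul_pow]
          ring
  refine lt_of_le_of_lt hle ?_
  rw [ENNReal.tsum_mul_left, ENNReal.tsum_geometric]
  refine ENNReal.mul_lt_top (ENNReal.mul_lt_top ENNReal.ofReal_lt_top hH0.lt_top) ?_
  rw [ENNReal.inv_lt_top, tsub_pos_iff_lt]
  rwa [ENNReal.ofReal_lt_one]
end
end

section
/- Let f : I1 = [a1,b1] → ℝ be monotone and integrable on I1, and let I = [a,b] ⊆ I1 be a subinterval with b > a such that f_I = f_{I1}. Then Ω(f,I) ≤ Ω(f,I1). -/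
open MeasureTheory Set Real

noncomputable section

theorem core_aux (g : ℝ → ℝ) (a1 b1 a b : ℝ)
    (h1 : a1 ≤ a) (hab : a < b) (h2 : b ≤ b1)
    (hm : MonotoneOn g (Set.Icc a1 b1))
    (hi : IntervalIntegrable g volume a1 b1)
    (h0 : ∫ x in a..b, g x = 0) (h01 : ∫ x in a1..b1, g x = 0) :
    (∫ x in a..b, |g x|) * (b1 - a1) ≤ (b - a) * ∫ x in a1..b1, |g x| := by
  have hsub : ∀ c d, a1 ≤ c → c ≤ d → d ≤ b1 → IntervalIntegrable g volume c d := by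
    intro c d hc hcd hd
    apply hi.mono_set
    rw [uIcc_of_le hcd, uIcc_of_le (by linarith)]
    exact Icc_subset_Icc hc hd
  have iA := hsub a1 a le_rfl h1 (by linarith)
  have iI := hsub a b h1 hab.le h2
  have iB := hsub b b1 (by linarith) h2 le_rfl
  have ma : a ∈ Set.Icc a1 b1 := ⟨h1, by linarith⟩
  have mb : b ∈ Set.Icc a1 b1 := ⟨by linarith, h2⟩
  have hga : g a ≤ 0 := by
    have := intervalIntegral.integral_mono_on (μ := volume) hab.le
      (intervalIntegrable_const (c := g a)) iI
      (fun x hx => hm ma ⟨h1.trans hx.1, hx.2.trans h2⟩ hx.1)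
    rw [h0, intervalIntegral.integral_const, smul_eq_mul] at this
    by_contra! h
    nlinarith
  have hgb : 0 ≤ g b := by
    have := intervalIntegral.integral_mono_on (μ := volume) hab.le iI
      (intervalIntegrable_const (c := g b))
      (fun x hx => hm ⟨h1.trans hx.1, hx.2.trans h2⟩ mb hx.2)
    rw [h0, intervalIntegral.integral_const, smul_eq_mul] at this
    by_contra! h
    nlinarith
  have hA : ∫ x in a1..a, |g x| = - ∫ x in a1..a, g x := by
    rw [← intervalIntegral.integral_neg]
    apply intervalIntegral.integral_congr
    intro x hx
    rw [uIcc_of_le h1] at hx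
    exact abs_of_nonpos ((hm ⟨hx.1, by linarith [hx.2]⟩ ma hx.2).trans hga)
  have hB : ∫ x in b..b1, |g x| = ∫ x in b..b1, g x := by
    apply intervalIntegral.integral_congr
    intro x hx
    rw [uIcc_of_le h2] at hx
    exact abs_of_nonneg (hgb.trans (hm mb ⟨by linarith [hx.1], hx.2⟩ hx.1))
  have hA' : ∫ x in a1..a, g x ≤ (a - a1) * g a := by
    have := intervalIntegral.integral_mono_on (μ := volume) h1 iA
      (intervalIntegrable_const (c := g a))
      (fun x hx => hm ⟨hx.1, by linarith [hx.2]⟩ ma hx.2)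
    rwa [intervalIntegral.integral_const, smul_eq_mul] at this
  have hB' : (b1 - b) * g b ≤ ∫ x in b..b1, g x := by
    have := intervalIntegral.integral_mono_on (μ := volume) h2
      (intervalIntegrable_const (c := g b)) iB
      (fun x hx => hm mb ⟨by linarith [hx.1], hx.2⟩ hx.1)
    rwa [intervalIntegral.integral_const, smul_eq_mul] at this
  have s1 := intervalIntegral.integral_add_adjacent_intervals (iA.trans iI) iB
  have s2 := intervalIntegral.integral_add_adjacent_intervals iA iI
  have t1 := intervalIntegral.integral_add_adjacent_intervals (iA.trans iI).abs iB.abs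
  have t2 := intervalIntegral.integral_add_adjacent_intervals iA.abs iI.abs
  have hT0 : 0 ≤ ∫ x in a..b, |g x| :=
    intervalIntegral.integral_nonneg hab.le (fun x _ => abs_nonneg _)
  obtain ⟨p, hp⟩ : ∃ p, p = - g a := ⟨_, rfl⟩
  obtain ⟨q, hq⟩ : ∃ q, q = g b := ⟨_, rfl⟩
  have hgap : g a = -p := by linarith
  have hT : (∫ x in a..b, |g x|) * (p + q) ≤ 2 * p * q * (b - a) := by
    have := intervalIntegral.integral_mono_on (μ := volume) hab.le
      (iI.abs.mul_const (p + q))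
      ((intervalIntegrable_const (c := 2 * p * q)).add (iI.const_mul (q - p)))
      (fun x hx => by
        have l1 := hm ma ⟨h1.trans hx.1, hx.2.trans h2⟩ hx.1
        have l2 := hm ⟨h1.trans hx.1, hx.2.trans h2⟩ mb hx.2
        rcases abs_cases (g x) with ⟨e, _⟩ | ⟨e, _⟩ <;> simp only [e] <;> nlinarith)
    rw [intervalIntegral.integral_mul_const, intervalIntegral.integral_add
      intervalIntegrable_const (iI.const_mul _), intervalIntegral.integral_const_mul (q - p) g, h0,
      intervalIntegral.integral_const, smul_eq_mul] at this
    linarith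
  have hTz : p = 0 → q = 0 → ∫ x in a..b, |g x| = 0 := by
    intro p0 q0
    have : ∫ x in a..b, |g x| = ∫ x in a..b, (0:ℝ) := by
      apply intervalIntegral.integral_congr
      intro x hx
      rw [uIcc_of_le hab.le] at hx
      have l1 := hm ma ⟨h1.trans hx.1, hx.2.trans h2⟩ hx.1
      have l2 := hm ⟨h1.trans hx.1, hx.2.trans h2⟩ mb hx.2
      have : g x = 0 := by linarith
      simp [this]
    simpa using this
  obtain ⟨S, hS⟩ : ∃ S, S = ∫ x in b..b1, g x := ⟨_, rfl⟩
  have hSA : ∫ x in a1..a, g x = -S := by linarith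
  have e : ∫ x in a1..b1, |g x| = (∫ x in a..b, |g x|) + 2 * S := by linarith
  rw [e]
  generalize (∫ x in a..b, |g x|) = T at *
  have k1 : (a - a1) * p ≤ S := by rw [hSA, hgap] at hA'; linarith
  have k2 : (b1 - b) * q ≤ S := by rw [hS, hq]; exact hB'
  have p0 : 0 ≤ p := by linarith
  have q0 : 0 ≤ q := by linarith
  have S0 : 0 ≤ S := le_trans (mul_nonneg (by linarith) q0) k2
  have hL : 0 < b - a := by linarith
  suffices T * ((a - a1) + (b1 - b)) ≤ 2 * (b - a) * S by nlinarith
  have Tz : T = 0 → T * ((a - a1) + (b1 - b)) ≤ 2 * (b - a) * S := by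
    intro h; rw [h, zero_mul]; positivity
  rcases p0.eq_or_lt with hp0 | hp0 <;> rcases q0.eq_or_lt with hq0 | hq0
  · exact Tz (hTz hp0.symm hq0.symm)
  · apply Tz; rw [← hp0] at hT; nlinarith
  · apply Tz; rw [← hq0] at hT; nlinarith
  · have hpq : 0 < p * q := mul_pos hp0 hq0
    refine le_of_mul_le_mul_right ?_ hpq
    have m1 := mul_le_mul_of_nonneg_left k1 (mul_nonneg hT0 q0)
    have m2 := mul_le_mul_of_nonneg_left k2 (mul_nonneg hT0 p0)
    have m3 := mul_le_mul_of_nonneg_left hT S0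
    nlinarith

theorem core_aux2 (g : ℝ → ℝ) (a1 b1 a b : ℝ)
    (h1 : a1 ≤ a) (hab : a < b) (h2 : b ≤ b1)
    (hm : MonotoneOn g (Set.Icc a1 b1) ∨ AntitoneOn g (Set.Icc a1 b1))
    (hi : IntervalIntegrable g volume a1 b1)
    (h0 : ∫ x in a..b, g x = 0) (h01 : ∫ x in a1..b1, g x = 0) :
    (∫ x in a..b, |g x|) * (b1 - a1) ≤ (b - a) * ∫ x in a1..b1, |g x| := by
  rcases hm with hm | hm
  · exact core_aux g a1 b1 a b h1 hab h2 hm hi h0 h01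
  · have := core_aux (fun x => - g x) a1 b1 a b h1 hab h2 (fun x hx y hy h => neg_le_neg (hm hx hy h))
      hi.neg (by simp [h0]) (by simp [h01])
    simpa only [abs_neg] using this

theorem vol_aux (a b : ℝ) (h : a ≤ b) : (volume (Set.Icc a b)).toReal = b - a := by
  rw [Real.volume_Icc, ENNReal.toReal_ofReal (by linarith)]

theorem int_aux (g : ℝ → ℝ) (a b : ℝ) (h : a ≤ b) :
    ∫ x in Set.Icc a b, g x = ∫ x in a..b, g x := by
  rw [integral_Icc_eq_integral_Ioc, intervalIntegral.integral_of_le h]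

/-- **Lemma 2.2.** If `f` is monotone and integrable on `I₁ = [a₁,b₁]` and `I = [a,b] ⊆ I₁`
is a nondegenerate subinterval with `f_I = f_{I₁}`, then `Ω(f,I) ≤ Ω(f,I₁)`. -/
theorem osc_monotone_subinterval (f : ℝ → ℝ) (a1 b1 a b : ℝ)
    (h1 : a1 ≤ a) (hab : a < b) (h2 : b ≤ b1)
    (hmono : MonotoneOn f (Set.Icc a1 b1) ∨ AntitoneOn f (Set.Icc a1 b1))
    (hf : IntegrableOn f (Set.Icc a1 b1))
    (havg : avgI f (Set.Icc a b) = avgI f (Set.Icc a1 b1)) :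
    oscI f (Set.Icc a b) ≤ oscI f (Set.Icc a1 b1) := by
  have h11 : a1 < b1 := by linarith
  have hi : IntervalIntegrable f volume a1 b1 :=
    (intervalIntegrable_iff_integrableOn_Icc_of_le h11.le).2 hf
  have hi' : IntervalIntegrable f volume a b := by
    apply hi.mono_set
    rw [uIcc_of_le hab.le, uIcc_of_le h11.le]
    exact Icc_subset_Icc h1 h2
  have z : ∀ u v, u < v → IntervalIntegrable f volume u v →
      ∫ x in u..v, (f x - avgI f (Set.Icc u v)) = 0 := by
    intro u v huv hh
    rw [intervalIntegral.integral_sub hh intervalIntegrable_const,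
      intervalIntegral.integral_const, smul_eq_mul, avgI, vol_aux u v huv.le, int_aux _ u v huv.le]
    have : v - u ≠ 0 := (sub_pos.2 huv).ne.symm
    field_simp
    ring
  have z1 := z a b hab hi'
  have z2 := z a1 b1 h11 hi
  rw [havg] at z1
  unfold oscI
  rw [havg, vol_aux a b hab.le, vol_aux a1 b1 h11.le, int_aux _ a b hab.le, int_aux _ a1 b1 h11.le]
  generalize avgI f (Set.Icc a1 b1) = c at *
  have := core_aux2 (fun x => f x - c) a1 b1 a b h1 hab h2
    (hmono.imp (fun hm x hx y hy h => sub_le_sub_right (hm hx hy h) c)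
      (fun hm x hx y hy h => sub_le_sub_right (hm hx hy h) c))
    (hi.sub intervalIntegrable_const) z1 z2
  have p1 : 0 < b - a := by linarith
  have p2 : 0 < b1 - a1 := by linarith
  rw [inv_mul_eq_div, inv_mul_eq_div, div_le_div_iff₀ p1 p2]
  linarith
end
end

section
/- Let f be a nonincreasing, integrable function on (0,1] and set F(t) = (1/t)∫_0^t f(u)du for t ∈ (0,1]. Then for every constant γ > 1 and every t ∈ (0,1], F(t/γ) − F(t) ≤ (γ/2) · (1/t)∫_0^t |f(u) − F(t)| du. -/
open MeasureTheory Set Real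

noncomputable section

/-- **Lemma 2.3.** If `f` is nonincreasing and integrable on `(0,1]` and
`F(t) = (1/t) ∫_0^t f(u) du`, then for every `γ > 1` and `t ∈ (0,1]`,
`F(t/γ) − F(t) ≤ (γ/2) (1/t) ∫_0^t |f(u) − F(t)| du`. -/
theorem hardy_average_difference (f : ℝ → ℝ)
    (hmono : AntitoneOn f (Set.Ioc 0 1))
    (hf : IntegrableOn f (Set.Ioc 0 1))
    (γ : ℝ) (hγ : 1 < γ) :
    ∀ t ∈ Set.Ioc (0:ℝ) 1,
      hardyAvg f (t / γ) - hardyAvg f t ≤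
        γ / 2 * (t⁻¹ * ∫ u in Set.Ioc (0:ℝ) t, |f u - hardyAvg f t|) := by
  intro t ht
  obtain ⟨ht0, ht1⟩ := ht
  have hγ0 : 0 < γ := by linarith
  have hs0 : 0 < t / γ := by positivity
  have hst : t / γ ≤ t := div_le_self ht0.le hγ.le
  set s := t / γ with hs
  set c := hardyAvg f t with hc
  have hft : IntegrableOn f (Set.Ioc 0 t) := hf.mono_set (Set.Ioc_subset_Ioc_right ht1)
  have hfs : IntegrableOn f (Set.Ioc 0 s) := hft.mono_set (Set.Ioc_subset_Ioc_right hst)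
  have hct : IntegrableOn (fun _ : ℝ => c) (Set.Ioc 0 t) := integrableOn_const (by simp)
  have hcs : IntegrableOn (fun _ : ℝ => c) (Set.Ioc 0 s) := integrableOn_const (by simp)
  have hg : IntegrableOn (fun u => f u - c) (Set.Ioc 0 t) := hft.sub hct
  have hgs : IntegrableOn (fun u => f u - c) (Set.Ioc 0 s) :=
    hg.mono_set (Set.Ioc_subset_Ioc_right hst)
  have hgr : IntegrableOn (fun u => f u - c) (Set.Ioc s t) :=
    hg.mono_set (Set.Ioc_subset_Ioc_left hs0.le)
  have hU : Set.Ioc 0 s ∪ Set.Ioc s t = Set.Ioc 0 t := Set.Ioc_union_Ioc_eq_Ioc hs0.le hst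
  have hD : Disjoint (Set.Ioc 0 s) (Set.Ioc s t) := Set.Ioc_disjoint_Ioc_of_le le_rfl
  have e1 := setIntegral_union hD measurableSet_Ioc hgs hgr
  have e2 := setIntegral_union hD measurableSet_Ioc hgs.abs hgr.abs
  rw [hU] at e1 e2
  have a1 : ∫ u in Set.Ioc 0 t, (f u - c) = (∫ u in Set.Ioc 0 t, f u) - t * c := by
    rw [integral_sub hft hct]; simp [ht0.le]
  have a2 : ∫ u in Set.Ioc 0 s, (f u - c) = (∫ u in Set.Ioc 0 s, f u) - s * c := by
    rw [integral_sub hfs hcs]; simp [hs0.le]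
  have a3 : t * c = ∫ u in Set.Ioc 0 t, f u := by
    rw [hc, hardyAvg, mul_inv_cancel_left₀ ht0.ne']
  have b1 := (le_abs_self _).trans
    (abs_integral_le_integral_abs (μ := volume.restrict (Set.Ioc 0 s)) (f := fun u => f u - c))
  have b2 := (neg_le_abs _).trans
    (abs_integral_le_integral_abs (μ := volume.restrict (Set.Ioc s t)) (f := fun u => f u - c))
  have key : 2 * ((∫ u in Set.Ioc 0 s, f u) - s * c) ≤ ∫ u in Set.Ioc 0 t, |f u - c| := by
    linarith
  have h3 : hardyAvg f s - c = γ / 2 * (t⁻¹ * (2 * ((∫ u in Set.Ioc 0 s, f u) - s * c))) := by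
    rw [hardyAvg, hs]
    field_simp
  rw [h3]
  gcongr
end
end

section
/- Let f : Q0 = [0,1]^n → [0,∞) be integrable with finite dyadic BMO seminorm ‖f‖_{*,D}. Then its nonincreasing rearrangement f^* satisfies ‖f^*‖_* ≤ 2^n ‖f‖_{*,D}, i.e. for every subinterval J ⊆ (0,1] with |J| > 0, (1/|J|)∫_J |f^*(u) − (f^*)_J| du ≤ 2^n ‖f‖_{*,D}. -/
open MeasureTheory Set Real

noncomputable section

open ProbabilityTheory

def cube (n k : ℕ) (m : Fin n → ℕ) : Set (Fin n → ℝ) :=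
  Set.pi univ fun i => Ico ((m i : ℝ) / 2 ^ k) (((m i : ℝ) + 1) / 2 ^ k)

lemma cube_meas (n k : ℕ) (m : Fin n → ℕ) : MeasurableSet (cube n k m) :=
  MeasurableSet.univ_pi fun _ => measurableSet_Ico

lemma cube_vol (n k : ℕ) (m : Fin n → ℕ) : volume.real (cube n k m) = (((2:ℝ) ^ k)⁻¹) ^ n := by
  have h : ∀ i, volume (Ico ((m i : ℝ) / 2 ^ k) (((m i : ℝ) + 1) / 2 ^ k))
      = ENNReal.ofReal (((2:ℝ) ^ k)⁻¹) := by
    intro i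
    rw [Real.volume_Ico]
    congr 1
    field_simp
    ring
  unfold cube Measure.real
  rw [volume_pi_pi]
  simp only [h]
  rw [Finset.prod_const, ENNReal.toReal_pow, ENNReal.toReal_ofReal (by positivity)]
  simp

lemma cube_vol_pos (n k : ℕ) (m : Fin n → ℕ) : 0 < volume.real (cube n k m) := by
  rw [cube_vol]; positivity

lemma cube_vol_succ (n k : ℕ) (m m' : Fin n → ℕ) :
    volume.real (cube n k m) = 2 ^ n * volume.real (cube n (k+1) m') := by
  rw [cube_vol, cube_vol, ← mul_pow]
  congr 1
  rw [pow_succ]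
  field_simp

lemma cube_ae (n k : ℕ) (m : Fin n → ℕ) :
    cube n k m =ᵐ[volume] Set.Icc (fun i => (m i : ℝ) / 2 ^ k) (fun i => ((m i : ℝ) + 1) / 2 ^ k) :=
  Measure.univ_pi_Ico_ae_eq_Icc

lemma cube_sub (n k : ℕ) (m : Fin n → ℕ) (hm : ∀ i, m i < 2 ^ k) : cube n k m ⊆ Q0 n := by
  intro x hx
  have hx' : ∀ i, (m i : ℝ) / 2 ^ k ≤ x i ∧ x i < ((m i : ℝ) + 1) / 2 ^ k := fun i => hx i trivial
  refine ⟨fun i => ?_, fun i => ?_⟩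
  · exact le_trans (by positivity) (hx' i).1
  · refine (hx' i).2.le.trans ?_
    have : (m i : ℝ) + 1 ≤ 2 ^ k := by exact_mod_cast hm i
    simpa using (div_le_one (by positivity)).2 this

lemma cube_children (n k : ℕ) (m : Fin n → ℕ) :
    cube n k m = ⋃ d : Fin n → Fin 2, cube n (k+1) (fun i => 2 * m i + (d i : ℕ)) := by
  have h2 : (0:ℝ) < 2 ^ k := by positivity
  ext x
  simp only [cube, mem_iUnion, mem_pi, mem_univ, true_imp_iff, mem_Ico, pow_succ,
    div_le_iff₀ h2, lt_div_iff₀ h2, div_le_iff₀ (mul_pos h2 two_pos), lt_div_iff₀ (mul_pos h2 two_pos)]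
  constructor
  · intro h
    refine ⟨fun i => if x i * (2 ^ k * 2) < 2 * m i + 1 then 0 else 1, fun i => ?_⟩
    have := h i
    beta_reduce
    split_ifs with h1
    · push_cast
      constructor <;> norm_num <;> linarith
    · push_cast
      constructor <;> norm_num <;> linarith
  · rintro ⟨d, h⟩ i
    have := h i
    have hd : ((d i : ℕ) : ℝ) ≤ 1 := by exact_mod_cast Nat.lt_succ_iff.1 (d i).2
    have hd0 : (0:ℝ) ≤ ((d i : ℕ) : ℝ) := by positivity
    push_cast at this
    constructor <;> linarith

lemma cube_disj (n k : ℕ) (m m' : Fin n → ℕ) (h : m ≠ m') :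
    Disjoint (cube n k m) (cube n k m') := by
  rw [Set.disjoint_left]
  intro x hx hx'
  apply h
  funext i
  have h2 : (0:ℝ) < 2 ^ k := by positivity
  have h1 : (m i : ℝ) / 2 ^ k ≤ x i ∧ x i < ((m i : ℝ) + 1) / 2 ^ k := hx i trivial
  have h3 : (m' i : ℝ) / 2 ^ k ≤ x i ∧ x i < ((m' i : ℝ) + 1) / 2 ^ k := hx' i trivial
  rw [div_le_iff₀ h2, lt_div_iff₀ h2] at h1 h3
  have e1 : (m i : ℝ) < m' i + 1 := by linarith
  have e2 : (m' i : ℝ) < m i + 1 := by linarith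
  norm_cast at e1 e2
  omega

lemma Q0_meas (n : ℕ) : MeasurableSet (Q0 n) := measurableSet_Icc

lemma Q0_vol (n : ℕ) : volume (Q0 n) = 1 := by
  unfold Q0
  rw [Real.volume_Icc_pi]; simp

lemma Q0_ae (n : ℕ) : cube n 0 0 =ᵐ[volume] Q0 n := by
  have := cube_ae n 0 0
  have h : Q0 n = Set.Icc (fun i => ((0 : Fin n → ℕ) i : ℝ) / 2 ^ 0)
      (fun i => (((0 : Fin n → ℕ) i : ℝ) + 1) / 2 ^ 0) := by
    unfold Q0
    congr 1 <;> · funext i; simp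
  rw [h]; exact this

lemma pospart {α : Type*} [MeasurableSpace α] {μ : Measure α} {f : α → ℝ} (hf : Integrable f μ)
    (h0 : ∫ x, f x ∂μ = 0) : ∫ x, |f x| ∂μ = 2 * ∫ x, max (f x) 0 ∂μ := by
  have : ∀ x, |f x| = 2 * max (f x) 0 - f x := by
    intro x
    rcases le_total 0 (f x) with h | h
    · rw [abs_of_nonneg h, max_eq_left h]; ring
    · rw [abs_of_nonpos h, max_eq_right h]; ring
  simp_rw [this]
  rw [integral_sub (hf.pos_part.const_mul 2) hf, h0, integral_const_mul]; ring

/-- average above -/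
lemma cube_pos_le {n k : ℕ} {m : Fin n → ℕ} {f : (Fin n → ℝ) → ℝ} {C α : ℝ}
    (hf : IntegrableOn f (cube n k m))
    (h : ∀ A, ∫ x in cube n k m, (f x - A) = 0 → ∫ x in cube n k m, |f x - A| ≤ C)
    (hα : ∫ x in cube n k m, (f x - α) ≤ 0) :
    ∫ x in cube n k m, max (f x - α) 0 ≤ C / 2 := by
  have hv := cube_vol_pos n k m
  have hfin : IsFiniteMeasure (volume.restrict (cube n k m)) := by
    refine ⟨?_⟩
    rw [Measure.restrict_apply_univ]
    by_contra hh
    simp only [not_lt, top_le_iff] at hh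
    simp [Measure.real, hh] at hv
  have hc : ∀ c : ℝ, Integrable (fun x => f x - c) (volume.restrict (cube n k m)) :=
    fun c => hf.sub (integrable_const c)
  have hint : ∀ c : ℝ, ∫ x in cube n k m, (f x - c) =
      (∫ x in cube n k m, f x) - volume.real (cube n k m) * c := by
    intro c
    rw [integral_sub hf (integrable_const c)]
    simp
  set A := (∫ x in cube n k m, f x) / volume.real (cube n k m) with hA
  have hA0 : ∫ x in cube n k m, (f x - A) = 0 := by
    rw [hint, hA]; field_simp; ring
  have hAα : A ≤ α := by
    rw [hint] at hα
    rw [hA, div_le_iff₀ hv]; linarith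
  have h1 := h A hA0
  rw [pospart (hc A) hA0] at h1
  have h2 : ∫ x in cube n k m, max (f x - α) 0 ≤ ∫ x in cube n k m, max (f x - A) 0 := by
    refine integral_mono (hc α).pos_part (hc A).pos_part fun x => ?_
    exact max_le_max (by linarith) le_rfl
  linarith

lemma cz {n : ℕ} {f ψ : (Fin n → ℝ) → ℝ} (hf : IntegrableOn f (Q0 n)) (hψi : IntegrableOn ψ (Q0 n))
    (hψ : ∀ x, 0 ≤ ψ x) {M : ℝ}
    (hosc : ∀ k m, (∀ i, m i < 2 ^ k) → ∀ A, ∫ x in cube n k m, (f x - A) = 0 →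
      ∫ x in cube n k m, |f x - A| ≤ M * volume.real (cube n k m))
    (N : ℕ) (hN : ∀ m, (∀ i, m i < 2 ^ N) → ∀ A, ∫ x in cube n N m, (f x - A) = 0 →
      ∫ x in cube n N m, |f x - A| ≤ ∫ x in cube n N m, ψ x) (α : ℝ) :
    ∀ j k, k + j = N → ∀ m : Fin n → ℕ, (∀ i, m i < 2 ^ k) → ∫ x in cube n k m, (f x - α) ≤ 0 →
      ∃ E ⊆ cube n k m, MeasurableSet E ∧ 0 ≤ ∫ x in E, (f x - α) ∧
        ∫ x in cube n k m, max (f x - α) 0 ≤ M / 2 * 2 ^ n * volume.real E + ∫ x in cube n k m, ψ x := by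
  have hfα : IntegrableOn (fun x => f x - α) (Q0 n) :=
    hf.sub (integrableOn_const (by simp [Q0_vol]) )
  have hfp : IntegrableOn (fun x => max (f x - α) 0) (Q0 n) := hfα.pos_part
  intro j
  induction j with
  | zero =>
    intro k hk m hm hα
    simp only [add_zero] at hk
    subst hk
    refine ⟨∅, empty_subset _, MeasurableSet.empty, by simp, ?_⟩
    have h1 := cube_pos_le (hf.mono_set (cube_sub n k m hm)) (hN m hm) hα
    have h2 : 0 ≤ ∫ x in cube n k m, ψ x := integral_nonneg hψ
    simp only [measureReal_empty, mul_zero, zero_add]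
    linarith
  | succ j ih =>
    intro k hk m hm hα
    have hch : ∀ d : Fin n → Fin 2, ∀ i, 2 * m i + (d i : ℕ) < 2 ^ (k+1) := by
      intro d i
      have := hm i
      have := (d i).2
      rw [pow_succ]; omega
    have hsub : ∀ d : Fin n → Fin 2, cube n (k+1) (fun i => 2 * m i + (d i : ℕ)) ⊆ cube n k m := by
      intro d
      rw [cube_children n k m]
      exact subset_iUnion (fun d : Fin n → Fin 2 => cube n (k+1) (fun i => 2 * m i + (d i : ℕ))) d
    by_cases hall : ∀ d : Fin n → Fin 2,
        ∫ x in cube n (k+1) (fun i => 2 * m i + (d i : ℕ)), (f x - α) ≤ 0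
    · choose E hE hEm hE0 hEb using fun d => ih (k+1) (by omega) _ (hch d) (hall d)
      have hdisj : Pairwise (Function.onFun Disjoint
          (fun d : Fin n → Fin 2 => cube n (k+1) (fun i => 2 * m i + (d i : ℕ)))) := by
        intro d d' hdd
        apply cube_disj
        intro h
        apply hdd
        funext i
        have := congrFun h i
        exact Fin.ext (by omega)
      have hdE : Pairwise (Function.onFun Disjoint E) := fun d d' hdd =>
        (hdisj hdd).mono (hE d) (hE d')
      have hEQ : ∀ d, E d ⊆ Q0 n := fun d => (hE d).trans (cube_sub _ _ _ (hch d))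
      refine ⟨⋃ d, E d, iUnion_subset fun d => (hE d).trans (hsub d), MeasurableSet.iUnion hEm, ?_, ?_⟩
      · rw [integral_iUnion_fintype hEm hdE (fun d => hfα.mono_set (hEQ d))]
        exact Finset.sum_nonneg fun d _ => hE0 d
      · rw [cube_children n k m, integral_iUnion_fintype (fun d => cube_meas _ _ _) hdisj
          (fun d => hfp.mono_set (cube_sub _ _ _ (hch d))),
          integral_iUnion_fintype (fun d => cube_meas _ _ _) hdisj
          (fun d => hψi.mono_set (cube_sub _ _ _ (hch d))),
          measureReal_iUnion_fintype hdE hEm (fun d => by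
            refine ((measure_mono (hEQ d)).trans_lt ?_).ne
            simp [Q0_vol]),
          Finset.mul_sum, ← Finset.sum_add_distrib]
        exact Finset.sum_le_sum fun d _ => hEb d
    · push Not at hall
      obtain ⟨d, hd⟩ := hall
      refine ⟨_, hsub d, cube_meas _ _ _, hd.le, ?_⟩
      have h1 := cube_pos_le (hf.mono_set (cube_sub n k m hm)) (hosc k m hm) hα
      have h2 : 0 ≤ ∫ x in cube n k m, ψ x := integral_nonneg hψ
      rw [cube_vol_succ n k m (fun i => 2 * m i + (d i : ℕ))] at h1
      linarith

lemma oneD {g : ℝ → ℝ} (hg : AntitoneOn g (Ioo 0 1)) (hgi : IntervalIntegrable g volume 0 1)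
    {a b α e : ℝ} (ha : 0 ≤ a) (hab : a < b) (hb : b ≤ 1)
    (hα : ∫ u in a..b, (g u - α) = 0) (he1 : e ≤ 1)
    (hint : 0 ≤ ∫ u in (0:ℝ)..e, (g u - α)) :
    (∫ u in a..b, max (g u - α) 0) * e ≤ (b - a) * ∫ u in (0:ℝ)..1, max (g u - α) 0 := by
  have hgα : IntervalIntegrable (fun u => g u - α) volume 0 1 := hgi.sub intervalIntegrable_const
  have hgp : IntervalIntegrable (fun u => max (g u - α) 0) volume 0 1 :=
    ⟨hgα.1.pos_part, hgα.2.pos_part⟩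
  have hgn : IntervalIntegrable (fun u => max (α - g u) 0) volume 0 1 := by
    have h : IntervalIntegrable (fun u => α - g u) volume 0 1 := intervalIntegrable_const.sub hgi
    exact ⟨h.1.pos_part, h.2.pos_part⟩
  have sub : ∀ {F : ℝ → ℝ} {c d : ℝ}, IntervalIntegrable F volume 0 1 → 0 ≤ c → c ≤ 1 → 0 ≤ d →
      d ≤ 1 → IntervalIntegrable F volume c d := by
    intro F c d hF h0 h1 h2 h3
    apply hF.mono_set
    rw [uIcc_of_le zero_le_one]
    intro x hx
    have := hx.1
    have := hx.2
    constructor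
    · exact (le_min h0 h2).trans hx.1
    · exact hx.2.trans (max_le h1 h3)
  have hb0 : 0 ≤ b := ha.trans hab.le
  have ha1 : a ≤ 1 := hab.le.trans hb
  set χ : ℝ → ℝ := fun u => (Ioi α).indicator (fun _ => (1:ℝ)) (g u) with hχ
  have hχi : IntervalIntegrable χ volume 0 1 := by
    rw [intervalIntegrable_iff_integrableOn_Ioc_of_le zero_le_one]
    refine Integrable.of_bound (C := 1) ?_ ?_
    · have h1 : AEMeasurable g (volume.restrict (Ioc 0 1)) := hgi.1.aestronglyMeasurable.aemeasurable
      have h2 : Measurable ((Ioi α).indicator (fun _ : ℝ => (1:ℝ))) :=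
        measurable_const.indicator measurableSet_Ioi
      exact (h2.comp_aemeasurable h1).aestronglyMeasurable
    · refine Filter.Eventually.of_forall fun u => ?_
      simp only [hχ, indicator]
      split_ifs <;> simp
  have hχ1 : IntervalIntegrable (fun u => 1 - χ u) volume 0 1 := intervalIntegrable_const.sub hχi
  set s := ∫ u in a..b, χ u with hs
  set s' := ∫ u in a..b, (1 - χ u) with hs'
  have hss : s + s' = b - a := by
    rw [hs', intervalIntegral.integral_sub intervalIntegrable_const (sub hχi ha ha1 hb0 hb)]
    simp
    ring
  have hs0 : 0 ≤ s := intervalIntegral.integral_nonneg hab.le fun u _ => by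
    simp only [hχ, indicator]
    split_ifs <;> simp
  have hs0' : 0 ≤ s' := intervalIntegral.integral_nonneg hab.le fun u _ => by
    simp only [hχ, indicator]
    split_ifs <;> simp
  set B := ∫ u in a..b, max (g u - α) 0 with hB
  have hB0 : 0 ≤ B := intervalIntegral.integral_nonneg hab.le fun u _ => le_max_right _ _
  have hBn : B = ∫ u in a..b, max (α - g u) 0 := by
    have : ∫ u in a..b, (max (g u - α) 0 - max (α - g u) 0) = 0 := by
      refine Eq.trans ?_ hα
      congr 1
      funext u
      rcases le_total (g u) α with h | h
      · rw [max_eq_right (by linarith), max_eq_left (by linarith)]; ring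
      · rw [max_eq_left (by linarith), max_eq_right (by linarith)]; ring
    rw [intervalIntegral.integral_sub (sub hgp ha ha1 hb0 hb) (sub hgn ha ha1 hb0 hb)] at this
    linarith
  set A := ∫ u in (0:ℝ)..a, (g u - α) with hA
  set T := ∫ u in (0:ℝ)..1, max (g u - α) 0 with hT
  have hTAB : A + B ≤ T := by
    have h1 : T = (∫ u in (0:ℝ)..a, max (g u - α) 0) + B + ∫ u in b..1, max (g u - α) 0 := by
      rw [hB, intervalIntegral.integral_add_adjacent_intervals (sub hgp le_rfl zero_le_one ha ha1)
        (sub hgp ha ha1 hb0 hb), intervalIntegral.integral_add_adjacent_intervals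
        (sub hgp le_rfl zero_le_one hb0 hb) (sub hgp hb0 hb zero_le_one le_rfl)]
    have h2 : A ≤ ∫ u in (0:ℝ)..a, max (g u - α) 0 :=
      intervalIntegral.integral_mono_on ha (sub hgα le_rfl zero_le_one ha ha1)
        (sub hgp le_rfl zero_le_one ha ha1) fun u _ => le_max_left _ _
    have h3 : 0 ≤ ∫ u in b..1, max (g u - α) 0 :=
      intervalIntegral.integral_nonneg hb fun u _ => le_max_right _ _
    linarith
  -- left side
  have hleft : a * B ≤ A * s ∧ 0 ≤ A := by
    rcases ha.eq_or_lt with h0 | h0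
    · have : A = 0 := by rw [hA, ← h0]; simp
      rw [this, ← h0]; simp
    · have haI : a ∈ Ioo (0:ℝ) 1 := ⟨h0, hab.trans_le hb⟩
      have h1 : B ≤ ∫ u in a..b, (g a - α) * χ u := by
        refine intervalIntegral.integral_mono_on_of_le_Ioo hab.le (sub hgp ha ha1 hb0 hb)
          ((sub hχi ha ha1 hb0 hb).const_mul _) fun u hu => ?_
        have := hg haI ⟨h0.trans hu.1, hu.2.trans_le hb⟩ hu.1.le
        simp only [hχ, indicator, mem_Ioi]
        split_ifs with hh
        · rw [max_eq_left (by linarith)]; linarith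
        · rw [max_eq_right (by linarith)]; simp
      rw [intervalIntegral.integral_const_mul, ← hs] at h1
      have h2 : ∫ u in (0:ℝ)..a, (g a - α) ≤ A := by
        refine intervalIntegral.integral_mono_on_of_le_Ioo ha intervalIntegrable_const
          (sub hgα le_rfl zero_le_one ha ha1) fun u hu => ?_
        have := hg ⟨hu.1, hu.2.trans haI.2⟩ haI hu.2.le
        linarith
      rw [intervalIntegral.integral_const, smul_eq_mul, sub_zero] at h2
      have h3 : ∫ u in a..b, (g u - α) ≤ ∫ u in a..b, (g a - α) := by
        refine intervalIntegral.integral_mono_on_of_le_Ioo hab.le (sub hgα ha ha1 hb0 hb)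
          intervalIntegrable_const fun u hu => ?_
        have := hg haI ⟨h0.trans hu.1, hu.2.trans_le hb⟩ hu.1.le
        linarith
      rw [hα, intervalIntegral.integral_const, smul_eq_mul] at h3
      have h4 : 0 ≤ g a - α := nonneg_of_mul_nonneg_right h3 (by linarith)
      refine ⟨?_, (mul_nonneg ha h4).trans h2⟩
      nlinarith [mul_le_mul_of_nonneg_left h1 ha, mul_le_mul_of_nonneg_right h2 hs0]
  obtain ⟨hl, hA0⟩ := hleft
  have key : B * e ≤ (b - a) * (A + B) := by
    rcases le_or_gt e b with heb | heb
    · nlinarith [mul_le_mul_of_nonneg_left heb hB0, mul_nonneg hA0 hs0']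
    · have hbI : b ∈ Ioo (0:ℝ) 1 := ⟨ha.trans_lt hab, heb.trans_le he1⟩
      have he0 : 0 ≤ e := hb0.trans heb.le
      have h1 : B ≤ ∫ u in a..b, (α - g b) * (1 - χ u) := by
        rw [hBn]
        refine intervalIntegral.integral_mono_on_of_le_Ioo hab.le (sub hgn ha ha1 hb0 hb)
          ((sub hχ1 ha ha1 hb0 hb).const_mul _) fun u hu => ?_
        have := hg ⟨ha.trans_lt hu.1, hu.2.trans hbI.2⟩ hbI hu.2.le
        simp only [hχ, indicator, mem_Ioi]
        split_ifs with hh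
        · rw [max_eq_right (by linarith)]; simp
        · rw [max_eq_left (by linarith)]; linarith
      rw [intervalIntegral.integral_const_mul, ← hs'] at h1
      have h2 : ∫ u in b..e, (g u - α) ≤ ∫ u in b..e, (g b - α) := by
        refine intervalIntegral.integral_mono_on_of_le_Ioo heb.le
          (sub hgα hb0 hb he0 he1) intervalIntegrable_const fun u hu => ?_
        have := hg hbI ⟨hbI.1.trans hu.1, hu.2.trans_le he1⟩ hu.1.le
        linarith
      rw [intervalIntegral.integral_const, smul_eq_mul] at h2
      have h3 : ∫ u in (0:ℝ)..e, (g u - α) = A + (∫ u in a..b, (g u - α)) + ∫ u in b..e, (g u - α) := by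
        rw [hA, intervalIntegral.integral_add_adjacent_intervals (sub hgα le_rfl zero_le_one ha ha1)
          (sub hgα ha ha1 hb0 hb), intervalIntegral.integral_add_adjacent_intervals
          (sub hgα le_rfl zero_le_one hb0 hb) (sub hgα hb0 hb he0 he1)]
      rw [h3, hα] at hint
      have h4 : (e - b) * (α - g b) ≤ A := by linarith
      have h5 : (e - b) * B ≤ A * s' := by
        have := mul_le_mul_of_nonneg_left h1 (sub_nonneg.2 heb.le)
        nlinarith [mul_le_mul_of_nonneg_right h4 hs0']
      nlinarith
  exact key.trans (mul_le_mul_of_nonneg_left hTAB (by linarith))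

lemma approx {n : ℕ} {f : (Fin n → ℝ) → ℝ} (hf : IntegrableOn f (Q0 n)) {ε : ℝ} (hε : 0 < ε) :
    ∃ ψ : (Fin n → ℝ) → ℝ, IntegrableOn ψ (Q0 n) ∧ (∀ x, 0 ≤ ψ x) ∧ ∫ x in Q0 n, ψ x ≤ 4 * ε ∧
      ∃ N, ∀ m, (∀ i, m i < 2 ^ N) → ∀ A, ∫ x in cube n N m, (f x - A) = 0 →
      ∫ x in cube n N m, |f x - A| ≤ ∫ x in cube n N m, ψ x := by
  have hfin : IsFiniteMeasure (volume.restrict (Q0 n)) := ⟨by simp [Q0_vol]⟩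
  have hif : Integrable ((Q0 n).indicator f) volume := hf.integrable_indicator (Q0_meas n)
  obtain ⟨φ, hφc, hφ, hφcont, hφi⟩ := hif.exists_hasCompactSupport_integral_sub_le hε
  have huc := hφc.uniformContinuous_of_continuous hφcont
  obtain ⟨δ, hδ, hδ'⟩ := Metric.uniformContinuous_iff.1 huc ε hε
  obtain ⟨N, hN⟩ := exists_pow_lt_of_lt_one hδ (by norm_num : (1/2:ℝ) < 1)
  have hfφ : IntegrableOn (fun x => |f x - φ x|) (Q0 n) := (hf.sub hφi.integrableOn).abs
  have hψi : IntegrableOn (fun x => 2 * (|f x - φ x| + ε)) (Q0 n) :=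
    (hfφ.add (integrable_const ε)).const_mul 2
  refine ⟨fun x => 2 * (|f x - φ x| + ε), hψi, fun x => by positivity, ?_, N, ?_⟩
  · rw [integral_const_mul, integral_add hfφ (integrable_const ε)]
    have h1 : ∫ x in Q0 n, |f x - φ x| ≤ ε := by
      calc ∫ x in Q0 n, |f x - φ x| = ∫ x in Q0 n, ‖(Q0 n).indicator f x - φ x‖ := by
            refine setIntegral_congr_fun (Q0_meas n) fun x hx => ?_
            simp [indicator_of_mem hx]
        _ ≤ ∫ x, ‖(Q0 n).indicator f x - φ x‖ :=
            setIntegral_le_integral (hif.sub hφi).norm (Filter.Eventually.of_forall fun x => norm_nonneg _)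
        _ ≤ ε := hφ
    have h2 : ∫ x in Q0 n, ε = ε := by simp [Measure.real, Q0_vol]
    rw [h2]; linarith
  · intro m hm A hA
    have hsub := cube_sub n N m hm
    have hfinc : IsFiniteMeasure (volume.restrict (cube n N m)) :=
      ⟨by simpa using (measure_mono hsub).trans_lt (by simp [Q0_vol])⟩
    have hfc : Integrable f (volume.restrict (cube n N m)) := hf.mono_set hsub
    set c := φ (fun i => (m i : ℝ) / 2 ^ N) with hc
    have hφc : ∀ x ∈ cube n N m, |φ x - c| ≤ ε := by
      intro x hx
      have hx' : ∀ i, (m i : ℝ) / 2 ^ N ≤ x i ∧ x i < ((m i : ℝ) + 1) / 2 ^ N := fun i => hx i trivial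
      refine (hδ' (a := x) (b := fun i => (m i : ℝ) / 2 ^ N) ?_).le
      refine lt_of_le_of_lt ((dist_pi_le_iff (by positivity)).2 fun i => ?_) hN
      have h := hx' i
      rw [add_div] at h
      rw [Real.dist_eq, abs_of_nonneg (by linarith), one_div, inv_pow, ← one_div]
      linarith
    have i1 : Integrable (fun x => |f x - c|) (volume.restrict (cube n N m)) :=
      (hfc.sub (integrable_const c)).abs
    have h1 : ∫ x in cube n N m, |f x - A| ≤ ∫ x in cube n N m, (|f x - c| + |c - A|) := by
      refine integral_mono (hfc.sub (integrable_const A)).abs (i1.add (integrable_const _)) fun x => ?_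
      exact abs_sub_le _ _ _
    rw [integral_add i1 (integrable_const _)] at h1
    have h2 : ∫ x in cube n N m, |c - A| ≤ ∫ x in cube n N m, |f x - c| := by
      have e1 : ∫ x in cube n N m, (f x - c) = ∫ x in cube n N m, (A - c) := by
        rw [integral_sub hfc (integrable_const _)] at hA ⊢
        rw [integral_sub (integrable_const _) (integrable_const _)]
        linarith
      have e2 : ∫ x in cube n N m, |c - A| = |∫ x in cube n N m, (A - c)| := by
        rw [setIntegral_const, setIntegral_const, smul_eq_mul, smul_eq_mul, abs_mul,
          abs_of_nonneg measureReal_nonneg, abs_sub_comm]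
      rw [e2, ← e1]
      exact abs_integral_le_integral_abs
    have h3 : ∫ x in cube n N m, |f x - c| ≤ ∫ x in cube n N m, (|f x - φ x| + ε) := by
      refine setIntegral_mono_on i1 ((hfφ.mono_set hsub).add (integrable_const ε)) (cube_meas _ _ _)
        fun x hx => ?_
      have := abs_sub_le (f x) (φ x) c
      have := hφc x hx
      linarith
    rw [integral_const_mul]
    linarith

lemma rearr {n : ℕ} {f : (Fin n → ℝ) → ℝ} (hf : IntegrableOn f (Q0 n)) {g : ℝ → ℝ}
    (hg : AntitoneOn g (Ioo 0 1))
    (hid : IdentDistrib f g (volume.restrict (Q0 n)) (volume.restrict (Ioc 0 1))) {α : ℝ}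
    {E : Set (Fin n → ℝ)} (hE : E ⊆ Q0 n) (hEm : MeasurableSet E) (h0 : 0 ≤ ∫ x in E, (f x - α)) :
    0 ≤ ∫ u in (0:ℝ)..(volume.real E), (g u - α) := by
  have hfin : IsFiniteMeasure (volume.restrict (Q0 n)) := ⟨by simp [Q0_vol]⟩
  have hfc : ∀ c : ℝ, IntegrableOn (fun x => f x - c) (Q0 n) := fun c => hf.sub (integrable_const c)
  have hgi : IntegrableOn g (Ioc 0 1) := hid.integrable_iff.1 hf
  have hgc : ∀ c : ℝ, IntegrableOn (fun x => g x - c) (Ioc 0 1) :=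
    fun c => hgi.sub (integrable_const c)
  have hEfin : volume E ≠ ⊤ := ((measure_mono hE).trans_lt (by simp [Q0_vol])).ne
  have hfinE : IsFiniteMeasure (volume.restrict E) := ⟨by simpa using hEfin.lt_top⟩
  set e := volume.real E with he
  have he0 : 0 ≤ e := measureReal_nonneg
  have he1 : e ≤ 1 := by
    have := ENNReal.toReal_mono (by simp [Q0_vol]) (measure_mono hE (μ := volume))
    rw [Q0_vol, ENNReal.toReal_one] at this
    exact this
  rcases he0.eq_or_lt with h | hpos
  · rw [← h]; simp
  rcases he1.eq_or_lt with h | hlt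
  · rw [h, intervalIntegral.integral_of_le zero_le_one]
    have hcomp : IdentDistrib (fun x => f x - α) (fun u => g u - α) (volume.restrict (Q0 n))
      (volume.restrict (Ioc 0 1)) := hid.comp (u := fun y => y - α) (by fun_prop)
    rw [← hcomp.integral_eq]
    have hae : E =ᵐ[volume] Q0 n := by
      refine ae_eq_of_subset_of_measure_ge hE ?_ hEm.nullMeasurableSet (by simp [Q0_vol])
      rw [Q0_vol, ← ENNReal.ofReal_one, ← h, he, Measure.real, ENNReal.ofReal_toReal hEfin]
    rwa [← setIntegral_congr_set hae]
  · set c := g e with hc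
    have hcomp : IdentDistrib (fun x => max (f x - c) 0) (fun u => max (g u - c) 0)
      (volume.restrict (Q0 n)) (volume.restrict (Ioc 0 1)) :=
      hid.comp (u := fun y => max (y - c) 0) (by fun_prop)
    have h1 : ∫ x in E, (f x - c) ≤ ∫ x in Q0 n, max (f x - c) 0 := by
      calc _ ≤ ∫ x in E, max (f x - c) 0 :=
            integral_mono ((hfc c).mono_set hE) ((hfc c).pos_part.mono_measure (Measure.restrict_mono hE le_rfl))
              fun x => le_max_left _ _
        _ ≤ _ := setIntegral_mono_set (hfc c).pos_part
              (Filter.Eventually.of_forall fun x => le_max_right _ _) hE.eventuallyLE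
    rw [hcomp.integral_eq, ← intervalIntegral.integral_of_le zero_le_one] at h1
    have hgp : IntegrableOn (fun u => max (g u - c) 0) (Ioc 0 1) := (hgc c).pos_part
    have hsub1 : Ioc 0 e ⊆ Ioc (0:ℝ) 1 := Ioc_subset_Ioc_right he1
    have hsub2 : Ioc e 1 ⊆ Ioc (0:ℝ) 1 := Ioc_subset_Ioc_left he0
    have j1 : IntervalIntegrable (fun u => max (g u - c) 0) volume 0 e :=
      (intervalIntegrable_iff_integrableOn_Ioc_of_le he0).2 (hgp.mono_set hsub1)
    have j2 : IntervalIntegrable (fun u => max (g u - c) 0) volume e 1 :=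
      (intervalIntegrable_iff_integrableOn_Ioc_of_le he1).2 (hgp.mono_set hsub2)
    have j3 : ∀ c, IntervalIntegrable (fun u => g u - c) volume 0 e := fun c =>
      (intervalIntegrable_iff_integrableOn_Ioc_of_le he0).2 ((hgc c).mono_set hsub1)
    have j4 : IntervalIntegrable g volume 0 e :=
      (intervalIntegrable_iff_integrableOn_Ioc_of_le he0).2 (hgi.mono_set hsub1)
    rw [← intervalIntegral.integral_add_adjacent_intervals j1 j2] at h1
    have h2 : ∫ u in (0:ℝ)..e, max (g u - c) 0 ≤ ∫ u in (0:ℝ)..e, (g u - c) := by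
      refine intervalIntegral.integral_mono_on_of_le_Ioo he0 j1 (j3 c) fun u hu => ?_
      have := hg ⟨hu.1, hu.2.trans hlt⟩ ⟨hpos, hlt⟩ hu.2.le
      rw [max_eq_left (by linarith)]
    have h3 : ∫ u in e..1, max (g u - c) 0 ≤ ∫ u in e..1, (0:ℝ) := by
      refine intervalIntegral.integral_mono_on_of_le_Ioo he1 j2 intervalIntegrable_const fun u hu => ?_
      have := hg ⟨hpos, hlt⟩ ⟨hpos.trans hu.1, hu.2⟩ hu.1.le
      rw [max_eq_right (by linarith)]
    rw [intervalIntegral.integral_zero] at h3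
    rw [integral_sub (hf.mono_set hE) (integrable_const _), setIntegral_const, smul_eq_mul] at h0 h1
    rw [intervalIntegral.integral_sub j4 intervalIntegrable_const, intervalIntegral.integral_const,
      smul_eq_mul, sub_zero] at h2 ⊢
    rw [← he] at h0 h1
    linarith

lemma half {n : ℕ} {f : (Fin n → ℝ) → ℝ} (hf : IntegrableOn f (Q0 n)) {g : ℝ → ℝ}
    (hg : AntitoneOn g (Ioo 0 1))
    (hid : IdentDistrib f g (volume.restrict (Q0 n)) (volume.restrict (Ioc 0 1))) {M : ℝ} (hM0 : 0 ≤ M)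
    (hosc : ∀ k m, (∀ i, m i < 2 ^ k) → ∀ A, ∫ x in cube n k m, (f x - A) = 0 →
      ∫ x in cube n k m, |f x - A| ≤ M * volume.real (cube n k m))
    {a b α : ℝ} (ha : 0 ≤ a) (hab : a < b) (hb : b ≤ 1)
    (hα : ∫ u in a..b, (g u - α) = 0) (hQ : ∫ x in Q0 n, (f x - α) ≤ 0) :
    ∫ u in a..b, max (g u - α) 0 ≤ M / 2 * 2 ^ n * (b - a) := by
  have hgi : IntegrableOn g (Ioc 0 1) := hid.integrable_iff.1 hf
  have hgi' : IntervalIntegrable g volume 0 1 :=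
    (intervalIntegrable_iff_integrableOn_Ioc_of_le zero_le_one).2 hgi
  have hcomp : IdentDistrib (fun x => max (f x - α) 0) (fun u => max (g u - α) 0)
      (volume.restrict (Q0 n)) (volume.restrict (Ioc 0 1)) :=
      hid.comp (u := fun y => max (y - α) 0) (by fun_prop)
  have hTe := hcomp.integral_eq
  rw [← intervalIntegral.integral_of_le zero_le_one] at hTe
  set B := ∫ u in a..b, max (g u - α) 0 with hB
  set T := ∫ u in (0:ℝ)..1, max (g u - α) 0 with hT
  have hB0 : 0 ≤ B := intervalIntegral.integral_nonneg hab.le fun u _ => le_max_right _ _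
  have hgp : IntervalIntegrable (fun u => max (g u - α) 0) volume 0 1 := by
    have h : IntervalIntegrable (fun u => g u - α) volume 0 1 := hgi'.sub intervalIntegrable_const
    exact ⟨h.1.pos_part, h.2.pos_part⟩
  have hBT : B ≤ T := by
    refine intervalIntegral.integral_mono_interval ha hab.le hb ?_ hgp
    exact Filter.Eventually.of_forall fun u => le_max_right _ _
  have key : ∀ ε > 0, B * T ≤ M / 2 * 2 ^ n * (b - a) * T + B * (4 * ε) := by
    intro ε hε
    obtain ⟨ψ, hψi, hψ0, hψ, N, hN⟩ := approx hf hε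
    obtain ⟨E, hE, hEm, hE0, hEb⟩ := cz hf hψi hψ0 hosc N hN α N 0 (by omega) 0 (by simp)
      (by rw [setIntegral_congr_set (Q0_ae n)]; exact hQ)
    rw [setIntegral_congr_set (Q0_ae n), setIntegral_congr_set (Q0_ae n), hTe] at hEb
    have hEQ : E ⊆ Q0 n := hE.trans (cube_sub n 0 0 (by simp))
    have he1 : volume.real E ≤ 1 := by
      have := ENNReal.toReal_mono (by simp [Q0_vol]) (measure_mono hEQ (μ := volume))
      rw [Q0_vol, ENNReal.toReal_one] at this
      exact this
    have h1 := oneD hg hgi' ha hab hb hα he1 (rearr hf hg hid hEQ hEm hE0)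
    have hK : 0 ≤ M / 2 * 2 ^ n := by positivity
    have h2 := mul_le_mul_of_nonneg_left hEb hB0
    have h3 := mul_le_mul_of_nonneg_left h1 hK
    have h4 := mul_le_mul_of_nonneg_left hψ hB0
    nlinarith
  have hK : 0 ≤ M / 2 * 2 ^ n * (b - a) := mul_nonneg (by positivity) (by linarith)
  have key2 : B * T ≤ M / 2 * 2 ^ n * (b - a) * T := by
    refine le_of_forall_pos_le_add fun ε hε => ?_
    refine (key (ε / (4 * (B + 1))) (by positivity)).trans ?_
    have : B * (4 * (ε / (4 * (B + 1)))) ≤ ε := by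
      have : B * (4 * (ε / (4 * (B + 1)))) = ε * (B / (B + 1)) := by field_simp
      rw [this]
      have : B / (B + 1) ≤ 1 := (div_le_one (by linarith)).2 (by linarith)
      nlinarith
    linarith
  rcases (hB0.trans hBT).eq_or_lt with h | h
  · linarith
  · exact le_of_mul_le_mul_right key2 h

lemma ident {n : ℕ} {f : (Fin n → ℝ) → ℝ} (hf : IntegrableOn f (Q0 n)) (hpos : ∀ x ∈ Q0 n, 0 ≤ f x)
    {g : ℝ → ℝ} (hfs : IsRearrangement (fun x => |f x|) g) :
    IdentDistrib f g (volume.restrict (Q0 n)) (volume.restrict (Ioc 0 1)) := by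
  have hfin : IsFiniteMeasure (volume.restrict (Q0 n)) := ⟨by simp [Q0_vol]⟩
  have hfm : AEMeasurable f (volume.restrict (Q0 n)) := hf.aestronglyMeasurable.aemeasurable
  have hgm : AEMeasurable g (volume.restrict (Ioc 0 1)) :=
    aemeasurable_restrict_of_antitoneOn measurableSet_Ioc hfs.1
  refine ⟨hfm, hgm, ?_⟩
  have hm1 : IsFiniteMeasure (Measure.map f (volume.restrict (Q0 n))) := inferInstance
  have hm2 : IsFiniteMeasure (Measure.map g (volume.restrict (Ioc 0 1))) := inferInstance
  refine Measure.ext_of_Iic _ _ fun c => ?_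
  have hIoi : Measure.map f (volume.restrict (Q0 n)) (Ioi c) =
      Measure.map g (volume.restrict (Ioc 0 1)) (Ioi c) := by
    rw [Measure.map_apply_of_aemeasurable hfm measurableSet_Ioi,
      Measure.map_apply_of_aemeasurable hgm measurableSet_Ioi,
      Measure.restrict_apply₀' (Q0_meas n).nullMeasurableSet,
      Measure.restrict_apply₀' measurableSet_Ioc.nullMeasurableSet]
    have h := hfs.2.2 c
    have e1 : {x ∈ Q0 n | c < |f x|} = f ⁻¹' Ioi c ∩ Q0 n := by
      ext x
      simp only [mem_ofPred_eq, mem_inter_iff, mem_preimage, mem_Ioi]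
      constructor
      · rintro ⟨h1, h2⟩
        rw [abs_of_nonneg (hpos x h1)] at h2
        exact ⟨h2, h1⟩
      · rintro ⟨h1, h2⟩
        rw [abs_of_nonneg (hpos x h2)]
        exact ⟨h2, h1⟩
    have e2 : {t ∈ Ioc (0:ℝ) 1 | c < g t} = g ⁻¹' Ioi c ∩ Ioc 0 1 := by
      ext x
      simp only [mem_ofPred_eq, mem_inter_iff, mem_preimage, mem_Ioi]
      exact and_comm
    rw [← e1, ← e2, h]
  have hu : Measure.map f (volume.restrict (Q0 n)) univ =
      Measure.map g (volume.restrict (Ioc 0 1)) univ := by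
    rw [Measure.map_apply_of_aemeasurable hfm MeasurableSet.univ,
      Measure.map_apply_of_aemeasurable hgm MeasurableSet.univ]
    simp [Q0_vol]
  have hc : (Iic c : Set ℝ) = (Ioi c)ᶜ := by simp
  rw [hc, measure_compl measurableSet_Ioi (measure_ne_top _ _),
    measure_compl measurableSet_Ioi (measure_ne_top _ _), hIoi, hu]

lemma reflect {g : ℝ → ℝ} (hgm : AEMeasurable g (volume.restrict (Ioc 0 1))) :
    IdentDistrib g (fun u => g (1 - u)) (volume.restrict (Ioc 0 1)) (volume.restrict (Ioc 0 1)) := by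
  have hmp : MeasurePreserving (fun t : ℝ => 1 - t) (volume.restrict (Ioc 0 1))
      (volume.restrict (Ioc 0 1)) := by
    have h := (Measure.measurePreserving_sub_left (volume : Measure ℝ) 1).restrict_preimage
      (measurableSet_Ioc (a := (0:ℝ)) (b := 1))
    have e : (fun t : ℝ => 1 - t) ⁻¹' (Ioc 0 1) = Ico 0 1 := by
      ext x; simp only [mem_preimage, mem_Ioc, mem_Ico]
      constructor <;> rintro ⟨h1, h2⟩ <;> constructor <;> linarith
    rw [e, Measure.restrict_congr_set Ico_ae_eq_Ioc] at h
    exact h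
  refine ⟨hgm, ?_, ?_⟩
  · exact AEMeasurable.comp_aemeasurable (by rw [hmp.map_eq]; exact hgm) hmp.measurable.aemeasurable
  · have := AEMeasurable.map_map_of_aemeasurable (μ := volume.restrict (Ioc (0:ℝ) 1))
      (f := fun t : ℝ => 1 - t) (g := g)
      (by rw [hmp.map_eq]; exact hgm) hmp.measurable.aemeasurable
    rw [hmp.map_eq] at this
    exact this

lemma osc_cube {n : ℕ} {f : (Fin n → ℝ) → ℝ} (hf : IntegrableOn f (Q0 n)) {M : ℝ}
    (hM : ∀ Q, IsDyadic n Q → oscOn f Q ≤ M) :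
    ∀ k m, (∀ i, m i < 2 ^ k) → ∀ A, ∫ x in cube n k m, (f x - A) = 0 →
      ∫ x in cube n k m, |f x - A| ≤ M * volume.real (cube n k m) := by
  intro k m hm A hA
  have h := hM _ ⟨k, m, hm, rfl⟩
  have hv := cube_vol_pos n k m
  have hsub := cube_sub n k m hm
  have hfinc : IsFiniteMeasure (volume.restrict (cube n k m)) :=
    ⟨by simpa using (measure_mono hsub).trans_lt (by simp [Q0_vol])⟩
  unfold oscOn avgOn at h
  simp only [← setIntegral_congr_set (cube_ae n k m), ← measure_congr (cube_ae n k m)] at h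
  rw [integral_sub (hf.mono_set hsub) (integrable_const _), setIntegral_const, smul_eq_mul] at hA
  change (volume.real (cube n k m))⁻¹ * _ ≤ M at h
  have hA' : (volume (cube n k m)).toReal⁻¹ * ∫ x in cube n k m, f x = A := by
    change (volume.real (cube n k m))⁻¹ * _ = A
    rw [inv_mul_eq_iff_eq_mul₀ hv.ne']; linarith
  rw [hA', inv_mul_le_iff₀ hv] at h
  linarith

/-- **Remark 3.1.** If `f : [0,1]ⁿ → [0,∞)` is integrable with `Ω(f,Q) ≤ M` for all dyadic
`Q`, then the nonincreasing rearrangement `f*` satisfies `‖f*‖_* ≤ 2ⁿ M`: for every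
subinterval `J = (a,b] ⊆ (0,1]` of positive length, `(1/|J|) ∫_J |f* − (f*)_J| ≤ 2ⁿ M`. -/
theorem dyadic_bmo_rearrangement_star (n : ℕ) (hn : 1 ≤ n)
    (f : (Fin n → ℝ) → ℝ) (hf : IntegrableOn f (Q0 n)) (hpos : ∀ x ∈ Q0 n, 0 ≤ f x)
    (M : ℝ) (hM : ∀ Q, IsDyadic n Q → oscOn f Q ≤ M)
    (fstar : ℝ → ℝ) (hfs : IsRearrangement (fun x => |f x|) fstar)
    (a b : ℝ) (ha : 0 ≤ a) (hab : a < b) (hb : b ≤ 1) :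
    oscI fstar (Set.Ioc a b) ≤ 2 ^ n * M := by
  have hid := ident hf hpos hfs
  have hosc := osc_cube hf hM
  have hM0 : 0 ≤ M := by
    refine le_trans ?_ (hM (Set.Icc (fun i => ((0 : ℕ) : ℝ) / 2 ^ 0)
      (fun i => (((0 : ℕ) : ℝ) + 1) / 2 ^ 0)) ⟨0, fun _ => 0, by simp, rfl⟩)
    unfold oscOn
    exact mul_nonneg (by positivity) (integral_nonneg fun x => abs_nonneg _)
  have hg : AntitoneOn fstar (Ioo 0 1) := hfs.1.mono Ioo_subset_Ioc_self
  have hgi : IntegrableOn fstar (Ioc 0 1) := hid.integrable_iff.1 hf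
  have hgab : IntegrableOn fstar (Ioc a b) := hgi.mono_set (Ioc_subset_Ioc ha hb)
  have hv : (volume (Ioc a b)).toReal = b - a := by
    rw [Real.volume_Ioc, ENNReal.toReal_ofReal (by linarith)]
  have hfin : IsFiniteMeasure (volume.restrict (Ioc a b)) := inferInstance
  unfold oscI
  rw [hv]
  set α := avgI fstar (Ioc a b) with hα
  have hα0 : ∫ u in Ioc a b, (fstar u - α) = 0 := by
    rw [integral_sub hgab (integrable_const _), setIntegral_const, smul_eq_mul, hα, avgI, Measure.real, hv]
    have : b - a ≠ 0 := by linarith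
    field_simp
    ring
  have hiα : Integrable (fun u => fstar u - α) (volume.restrict (Ioc a b)) :=
    hgab.sub (integrable_const _)
  rw [inv_mul_le_iff₀ (by linarith)]
  have hα1 : ∫ u in a..b, (fstar u - α) = 0 := by
    rw [intervalIntegral.integral_of_le hab.le]; exact hα0
  rcases le_total (∫ x in Q0 n, (f x - α)) 0 with hQ | hQ
  · have h := half hf hg hid hM0 hosc ha hab hb hα1 hQ
    rw [intervalIntegral.integral_of_le hab.le] at h
    rw [pospart hiα hα0]
    linarith
  · have hid2 : IdentDistrib (fun x => - f x) (fun u => - fstar (1 - u)) (volume.restrict (Q0 n))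
        (volume.restrict (Ioc 0 1)) :=
      (hid.trans (reflect hid.aemeasurable_snd)).comp (u := fun y => -y) (by fun_prop)
    have hg2 : AntitoneOn (fun u => - fstar (1 - u)) (Ioo 0 1) := by
      intro x hx y hy hxy
      have := hg (a := 1 - y) (b := 1 - x) ⟨by linarith [hy.2], by linarith [hy.1]⟩
        ⟨by linarith [hx.2], by linarith [hx.1]⟩ (by linarith)
      simpa using this
    have hosc2 : ∀ k m, (∀ i, m i < 2 ^ k) → ∀ A, ∫ x in cube n k m, (-f x - A) = 0 →
        ∫ x in cube n k m, |-f x - A| ≤ M * volume.real (cube n k m) := by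
      intro k m hm A hA
      have e1 : ∀ x, -f x - A = -(f x - (-A)) := fun x => by ring
      simp_rw [e1, abs_neg] at hA ⊢
      rw [integral_neg, neg_eq_zero] at hA
      exact hosc k m hm _ hA
    have hα2 : ∫ u in (1 - b)..(1 - a), (- fstar (1 - u) - (-α)) = 0 := by
      rw [intervalIntegral.integral_comp_sub_left (fun u => - fstar u - (-α))]
      have e1 : ∀ x, -fstar x - (-α) = -(fstar x - α) := fun x => by ring
      simp_rw [e1, sub_sub_cancel]
      rw [intervalIntegral.integral_neg, hα1, neg_zero]
    have hQ2 : ∫ x in Q0 n, (-f x - (-α)) ≤ 0 := by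
      have e1 : ∀ x, -f x - (-α) = -(f x - α) := fun x => by ring
      simp_rw [e1]
      rw [integral_neg]; linarith
    have h := half hf.neg hg2 hid2 hM0 hosc2 (by linarith : 0 ≤ 1 - b) (by linarith)
      (by linarith : 1 - a ≤ 1) hα2 hQ2
    rw [intervalIntegral.integral_comp_sub_left (fun u => max (- fstar u - (-α)) 0), sub_sub_cancel,
      sub_sub_cancel, intervalIntegral.integral_of_le hab.le] at h
    have e1 : ∀ x, -fstar x - (-α) = -(fstar x - α) := fun x => by ring
    simp_rw [e1] at h
    have h2 := pospart hiα.neg (by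
      simp only [Pi.neg_apply]
      rw [integral_neg, hα0, neg_zero])
    simp only [Pi.neg_apply, abs_neg] at h2
    rw [h2]
    linarith
end
end
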